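/- Let F be a field with char(F) ≠ 2, let n ≥ 2, and let T : M_n(F) → M_n(F) be a bijective linear map. Then T(B_n) ⊆ B_n if and only if there exist a scalar α ∈ {−1, 1} and an invertible matrix P ∈ M_n(F) such that either T(X) = α·P·X·P⁻¹ for all X ∈ M_n(F), or T(X) = α·P·Xᵗ·P⁻¹ for all X ∈ M_n(F). -/

import Mathlib

open Matrix

/-- The set of matrices that are products of two involutions. -/
def ProdInv2 (F : Type*) [Field F] (n : ℕ) : Set (Matrix (Fin n) (Fin n) F) :=
  {A | ∃ J₁ J₂ : Matrix (Fin n) (Fin n) F, J₁ * J₁ = 1 ∧ J₂ * J₂ = 1 ∧ A = J₁ * J₂}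

/-!
A product of two involutions is invertible, so for `x ≠ 0` the space of all `X` with `T X *ᵥ x = 0`,
which has codimension `n`, contains none. For `n ≥ 3` let `𝒢` be its orthogonal complement under the
trace form. A product of two involutions on a complement of the line through `z` extends to one that
fixes `z` and has an arbitrary first row, and this row can be used to prescribe traces against the
`G ∈ 𝒢` for which `z` is not an eigenvector. By induction on the dimension some product of two
involutions is orthogonal to `𝒢`, unless for all but exceptional `z` the vectors `G z` lie in a
common plane through `z`. In that case `𝒢` consists of all endomorphisms of rank at most one with a
fixed range, or with a fixed kernel, so the `X` with `T X *ᵥ x = 0` have a common vector in their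
right kernels, or in their left kernels. For `n = 2` the same holds because these `X` are singular:
if `F` has more than three elements then `det (T X) = det (T 1) * det X`, and over the field with
three elements a nonzero `X` of trace zero in the space settles the matter.

The same alternative holds for all `x`, and after transposing it is the first one. Then `X *ᵥ z` is
an injective linear image of `T X *ᵥ x` with `z` depending on `x`, and comparing the images for `x`,
`y` and `x + y` gives `T X = P * X * Q`. Finally `A * (Q * P)` is a product of two involutions
whenever `A` is. As such products have the same trace as their inverses, this makes `Q * P` its own
inverse and central, hence `±1`.
-/

/-- `a` is a product of two involutions; `1` counts as an involution. For the monoid of `n × n`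
matrices over a field this is membership in `ProdInv2`. -/
def IsProdTwoInvolutions {M : Type*} [Monoid M] (a : M) : Prop :=
  ∃ s t : M, s * s = 1 ∧ t * t = 1 ∧ a = s * t

namespace IsProdTwoInvolutions

section Monoid

variable {M N : Type*} [Monoid M] [Monoid N] {a : M}

lemma iff_exists_involution :
    IsProdTwoInvolutions a ↔ ∃ s : M, s * s = 1 ∧ s * a * (s * a) = 1 := by
  constructor
  · rintro ⟨s, t, hs, ht, rfl⟩
    exact ⟨s, hs, by rwa [← mul_assoc s s t, hs, one_mul]⟩
  · rintro ⟨s, hs, hsa⟩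
    exact ⟨s, s * a, hs, hsa, by rw [← mul_assoc, hs, one_mul]⟩

lemma isUnit (ha : IsProdTwoInvolutions a) : IsUnit a := by
  obtain ⟨s, t, hs, ht, rfl⟩ := ha
  exact (Units.mk s s hs hs * Units.mk t t ht ht).isUnit

lemma map {G : Type*} [FunLike G M N] [MonoidHomClass G M N] (f : G)
    (ha : IsProdTwoInvolutions a) : IsProdTwoInvolutions (f a) := by
  obtain ⟨s, t, hs, ht, rfl⟩ := ha
  exact ⟨f s, f t, by rw [← map_mul, hs, map_one], by rw [← map_mul, ht, map_one], map_mul f s t⟩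

end Monoid

section Ring

variable {R : Type*} [Ring R] {a m s : R}

lemma neg (ha : IsProdTwoInvolutions a) : IsProdTwoInvolutions (-a) := by
  obtain ⟨s, t, hs, ht, rfl⟩ := ha
  exact ⟨-s, t, by rwa [neg_mul_neg], ht, by rw [neg_mul]⟩

lemma of_cayley (hs : s * s = 1) (hsm : s * m = -(m * s)) (hm : IsUnit (1 - m))
    (ha : a * (1 - m) = 1 + m) : IsProdTwoInvolutions a := by
  refine iff_exists_involution.2 ⟨s, hs, hm.mul_right_cancel ?_⟩
  have hplus : s * (1 + m) = (1 - m) * s := by rw [mul_add, hsm]; noncomm_ring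
  calc s * a * (s * a) * (1 - m) = s * a * s * (a * (1 - m)) := by noncomm_ring
    _ = s * a * (s * (1 + m)) := by rw [ha]; noncomm_ring
    _ = s * (a * (1 - m)) * s := by rw [hplus]; noncomm_ring
    _ = (1 - m) * (s * s) := by rw [ha, hplus]; noncomm_ring
    _ = 1 * (1 - m) := by rw [hs]; noncomm_ring

lemma exists_mul_sub_one_pow_comm (hs : s * s = 1) (hsa : s * a * (s * a) = 1) (k : ℕ) :
    ∃ d, s * (a - 1) ^ k = (a - 1) ^ k * d := by
  have hstep : s * (a - 1) = (a - 1) * -(s * a) := by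
    have hasa : a * (s * a) = s := by
      calc a * (s * a) = s * s * a * (s * a) := by rw [hs, one_mul]
        _ = s * (s * a * (s * a)) := by noncomm_ring
        _ = s := by rw [hsa, mul_one]
    calc s * (a - 1) = s * a - a * (s * a) := by rw [hasa]; noncomm_ring
      _ = (a - 1) * -(s * a) := by noncomm_ring
  induction k with
  | zero => exact ⟨s, by simp⟩
  | succ k ih =>
    have hcomm : a * (a - 1) ^ k = (a - 1) ^ k * a :=
      (((Commute.refl a).sub_right (Commute.one_right a)).pow_right k).eq
    obtain ⟨d, hd⟩ := ih
    refine ⟨-(d * a), ?_⟩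
    calc s * (a - 1) ^ (k + 1) = s * (a - 1) * (a - 1) ^ k := by rw [pow_succ', mul_assoc]
      _ = (a - 1) * -(s * (a * (a - 1) ^ k)) := by rw [hstep]; noncomm_ring
      _ = (a - 1) * -((s * (a - 1) ^ k) * a) := by rw [hcomm, mul_assoc]
      _ = (a - 1) ^ (k + 1) * -(d * a) := by rw [hd, pow_succ']; noncomm_ring

end Ring

end IsProdTwoInvolutions

section ModularLattice

variable {α : Type*} [Lattice α] [BoundedOrder α] [IsModularLattice α] [ComplementedLattice α]

lemma exists_le_disjoint_sup_eq {a b c : α} (hab : Disjoint a b) (ha : a ≤ c) (hb : b ≤ c) :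
    ∃ a', a ≤ a' ∧ Disjoint a' b ∧ a' ⊔ b = c := by
  obtain ⟨d, hd, hdc⟩ := IsModularLattice.exists_disjoint_and_sup_eq (sup_le ha hb)
  refine ⟨a ⊔ d, le_sup_left, ?_, by rw [sup_right_comm, hdc]⟩
  exact (hab.symm.disjoint_sup_right_of_disjoint_sup_left (sup_comm a b ▸ hd)).symm

lemma exists_disjoint_sup_eq_sup {a₀ a₁ c₀ c₁ : α} (ha : Disjoint a₀ a₁) (h₀ : a₀ ≤ c₀)
    (h₁ : a₁ ≤ c₁) : ∃ e₀ e₁, a₀ ≤ e₀ ∧ e₀ ≤ c₀ ∧ a₁ ≤ e₁ ∧ e₁ ≤ c₁ ∧ Disjoint e₀ e₁ ∧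
      e₀ ⊔ e₁ = c₀ ⊔ c₁ := by
  obtain ⟨e₀, hae₀, hd₀, hs₀⟩ :=
    exists_le_disjoint_sup_eq (ha.mono_right inf_le_left) h₀ (inf_le_right : a₁ ⊓ c₀ ≤ c₀)
  have hec₀ : e₀ ≤ c₀ := le_sup_left.trans hs₀.le
  have hd₀' : Disjoint e₀ a₁ := by
    rw [disjoint_iff, ← inf_eq_left.2 hec₀, inf_right_comm, inf_assoc]
    exact hd₀.eq_bot
  obtain ⟨e₁, hae₁, hd₁, hs₁⟩ :=
    exists_le_disjoint_sup_eq (hd₀'.symm.mono_right inf_le_left) h₁ (inf_le_right : e₀ ⊓ c₁ ≤ c₁)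
  have hec₁ : e₁ ≤ c₁ := le_sup_left.trans hs₁.le
  refine ⟨e₀, e₁, hae₀, hec₀, hae₁, hec₁, ?_, le_antisymm (sup_le_sup hec₀ hec₁) (sup_le ?_ ?_)⟩
  · rw [disjoint_comm, disjoint_iff, ← inf_eq_left.2 hec₁, inf_assoc, inf_comm c₁]
    exact hd₁.eq_bot
  · rw [← hs₀]
    exact sup_le_sup_left (inf_le_left.trans hae₁) e₀
  · rw [← hs₁]
    exact sup_le le_sup_right (inf_le_left.trans le_sup_left)

end ModularLattice

section Unipotent

variable {F V W : Type*} [Field F] [AddCommGroup V] [Module F V] [AddCommGroup W] [Module F W]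

lemma exists_disjoint_sup_eq_of_map_eq_sup (N : Module.End F V) {p i₀ i₁ : Submodule F V}
    (hp : p.map N ≤ p) (hi : Disjoint i₀ i₁) (hsup : i₀ ⊔ i₁ = p.map N)
    (h₀ : i₀ ≤ i₁.comap N) (h₁ : i₁ ≤ i₀.comap N) :
    ∃ e₀ e₁ : Submodule F V, Disjoint e₀ e₁ ∧ e₀ ⊔ e₁ = p ∧ e₀ ≤ e₁.comap N ∧
      e₁ ≤ e₀.comap N := by
  have hi₀ : i₀ ≤ p.map N := hsup ▸ le_sup_left
  have hi₁ : i₁ ≤ p.map N := hsup ▸ le_sup_right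
  obtain ⟨e₀, e₁, hie₀, hec₀, hie₁, hec₁, hd, hs⟩ := exists_disjoint_sup_eq_sup hi
    (le_inf (hi₀.trans hp) h₀) (le_inf (hi₁.trans hp) h₁)
  refine ⟨e₀, e₁, hd, hs.trans (le_antisymm (sup_le inf_le_left inf_le_left) fun x hx => ?_),
    fun x hx => hie₁ (hec₀ hx).2, fun x hx => hie₀ (hec₁ hx).2⟩
  obtain ⟨u, hu, w, hw, huw⟩ := Submodule.mem_sup.1 (hsup ▸ Submodule.mem_map_of_mem hx)
  obtain ⟨y, hy, rfl⟩ := hi₀ hu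
  refine Submodule.mem_sup.2 ⟨x - y, ⟨p.sub_mem hx hy, ?_⟩, y, ⟨hy, hu⟩, sub_add_cancel x y⟩
  rwa [SetLike.mem_coe, Submodule.mem_comap, map_sub, ← huw, add_sub_cancel_left]

lemma exists_isCompl_grading_of_isNilpotent {N : Module.End F V} (hN : IsNilpotent N) :
    ∃ e₀ e₁ : Submodule F V, IsCompl e₀ e₁ ∧ e₀ ≤ e₁.comap N ∧ e₁ ≤ e₀.comap N := by
  obtain ⟨m, hm⟩ := hN
  have key : ∀ j ≤ m, ∃ e₀ e₁ : Submodule F V, Disjoint e₀ e₁ ∧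
      e₀ ⊔ e₁ = LinearMap.range (N ^ (m - j)) ∧ e₀ ≤ e₁.comap N ∧ e₁ ≤ e₀.comap N := by
    intro j
    induction j with
    | zero => exact fun _ => ⟨⊥, ⊥, disjoint_bot_left, by simp [hm], bot_le, bot_le⟩
    | succ j ih =>
      intro hj
      obtain ⟨i₀, i₁, hd, hs, h₀, h₁⟩ := ih (Nat.le_of_succ_le hj)
      have hrange : LinearMap.range (N ^ (m - j)) =
          (LinearMap.range (N ^ (m - (j + 1)))).map N := by
        rw [show m - j = m - (j + 1) + 1 by lia, pow_succ', Module.End.mul_eq_comp,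
          LinearMap.range_comp]
      refine exists_disjoint_sup_eq_of_map_eq_sup N ?_ hd (hs.trans hrange) h₀ h₁
      rw [← LinearMap.range_comp, ← Module.End.mul_eq_comp, ← pow_succ', pow_succ]
      exact LinearMap.range_comp_le_range _ _
  obtain ⟨e₀, e₁, hd, hs, h₀, h₁⟩ := key m le_rfl
  refine ⟨e₀, e₁, ⟨hd, codisjoint_iff.2 ?_⟩, h₀, h₁⟩
  rw [hs, Nat.sub_self, pow_zero, Module.End.one_eq_id, LinearMap.range_id]

lemma exists_involution_anticomm_of_isNilpotent {N : Module.End F V} (hN : IsNilpotent N) :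
    ∃ J : Module.End F V, J * J = 1 ∧ J * N = -(N * J) := by
  obtain ⟨e₀, e₁, hc, h₀, h₁⟩ := exists_isCompl_grading_of_isNilpotent hN
  let J : Module.End F V := LinearMap.ofIsCompl hc e₀.subtype (-e₁.subtype)
  have hJ₀ : ∀ x ∈ e₀, J x = x := fun x hx => LinearMap.ofIsCompl_apply_left hc ⟨x, hx⟩
  have hJ₁ : ∀ x ∈ e₁, J x = -x := fun x hx => LinearMap.ofIsCompl_apply_right hc ⟨x, hx⟩
  have hsplit (x : V) : ∃ u ∈ e₀, ∃ w ∈ e₁, u + w = x :=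
    Submodule.mem_sup.1 (hc.sup_eq_top ▸ Submodule.mem_top)
  refine ⟨J, LinearMap.ext fun x => ?_, LinearMap.ext fun x => ?_⟩ <;>
    obtain ⟨u, hu, w, hw, rfl⟩ := hsplit x
  · simp [hJ₀ u hu, hJ₁ w hw]
  · simp [hJ₀ u hu, hJ₁ w hw, hJ₁ _ (h₀ hu), hJ₀ _ (h₁ hw), add_comm]

lemma IsProdTwoInvolutions.of_isNilpotent_sub_one (h2 : (2 : F) ≠ 0) {A : Module.End F V}
    (hA : IsNilpotent (A - 1)) : IsProdTwoInvolutions A := by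
  have h2unit : IsUnit (2 : Module.End F V) := by
    rw [← map_ofNat (algebraMap F (Module.End F V)) 2]
    exact h2.isUnit.map _
  obtain ⟨u, hu⟩ : IsUnit (A + 1) := by
    rw [show A + 1 = 2 + (A - 1) by rw [← one_add_one_eq_two]; abel]
    exact hA.isUnit_add_left_of_commute h2unit (Commute.ofNat_right _ 2)
  have hcomm : Commute (A - 1) (↑u⁻¹ : Module.End F V) := by
    refine Commute.units_inv_right ?_
    rw [hu]
    exact ((Commute.refl A).add_right (Commute.one_right A)).sub_left (Commute.one_left _)
  set N : Module.End F V := (A - 1) * ↑u⁻¹ with hNdef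
  have hN : IsNilpotent N := hcomm.isNilpotent_mul_right hA
  have hNu : N * u = A - 1 := by rw [hNdef, mul_assoc, Units.inv_mul, mul_one]
  obtain ⟨J, hJ, hJN⟩ := exists_involution_anticomm_of_isNilpotent hN
  refine IsProdTwoInvolutions.of_cayley hJ hJN hN.isUnit_one_sub (u.isUnit.mul_right_cancel ?_)
  rw [mul_assoc, sub_mul, add_mul, hNu, one_mul, hu]
  noncomm_ring

namespace IsProdTwoInvolutions

lemma of_isCompl {A : Module.End F V} {p q : Submodule F V} (hc : IsCompl p q)
    (hp : ∀ x ∈ p, A x ∈ p) (hq : ∀ x ∈ q, A x ∈ q) (hAp : IsProdTwoInvolutions (A.restrict hp))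
    (hAq : IsProdTwoInvolutions (A.restrict hq)) : IsProdTwoInvolutions A := by
  obtain ⟨Sp, Tp, hSp, hTp, hp'⟩ := hAp
  obtain ⟨Sq, Tq, hSq, hTq, hq'⟩ := hAq
  let glue (f : Module.End F p) (g : Module.End F q) : Module.End F V :=
    LinearMap.ofIsCompl hc (p.subtype ∘ₗ f) (q.subtype ∘ₗ g)
  have glue_left (f g) (x : p) : glue f g x = f x := LinearMap.ofIsCompl_apply_left hc x
  have glue_right (f g) (x : q) : glue f g x = g x := LinearMap.ofIsCompl_apply_right hc x
  have hext {f g : Module.End F V} (hp : ∀ x : p, f x = g x) (hq : ∀ x : q, f x = g x) :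
      f = g := by
    refine LinearMap.ext fun x => ?_
    obtain ⟨u, hu, w, hw, rfl⟩ :=
      Submodule.mem_sup.1 (hc.sup_eq_top ▸ Submodule.mem_top : x ∈ p ⊔ q)
    rw [map_add, map_add, hp ⟨u, hu⟩, hq ⟨w, hw⟩]
  have hsq {f : Module.End F p} {g : Module.End F q} (hf : f * f = 1) (hg : g * g = 1) :
      glue f g * glue f g = 1 := by
    refine hext (fun x => ?_) fun x => ?_
    · rw [Module.End.mul_apply, glue_left, glue_left, ← Module.End.mul_apply, hf,
        Module.End.one_apply, Module.End.one_apply]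
    · rw [Module.End.mul_apply, glue_right, glue_right, ← Module.End.mul_apply, hg,
        Module.End.one_apply, Module.End.one_apply]
  refine ⟨glue Sp Sq, glue Tp Tq, hsq hSp hSq, hsq hTp hTq, hext (fun x => ?_) fun x => ?_⟩
  · rw [Module.End.mul_apply, glue_left, glue_left, ← Module.End.mul_apply, ← hp']
    rfl
  · rw [Module.End.mul_apply, glue_right, glue_right, ← Module.End.mul_apply, ← hq']
    rfl

lemma of_injective {A : Module.End F V} {B J : Module.End F W} {f : V →ₗ[F] W}
    (hf : Function.Injective f) (hfA : ∀ x, f (A x) = B (f x)) (hJ : J * J = 1)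
    (hJB : J * B * (J * B) = 1) (hfJ : ∀ x, J (f x) ∈ LinearMap.range f) :
    IsProdTwoInvolutions A := by
  let e := LinearEquiv.ofInjective f hf
  let J' : Module.End F V := e.symm ∘ₗ (J ∘ₗ f).codRestrict (LinearMap.range f) hfJ
  have hJ' (x : V) : f (J' x) = J (f x) :=
    congrArg Subtype.val (e.apply_symm_apply ((J ∘ₗ f).codRestrict (LinearMap.range f) hfJ x))
  refine iff_exists_involution.2
    ⟨J', LinearMap.ext fun x => hf ?_, LinearMap.ext fun x => hf ?_⟩
  · rw [Module.End.mul_apply, hJ', hJ', ← Module.End.mul_apply, hJ]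
    rfl
  · simp only [Module.End.mul_apply, hJ', hfA, Module.End.one_apply]
    exact LinearMap.congr_fun hJB (f x)

variable {A : Module.End F V} {B : Module.End F W} {p : V →ₗ[F] W}

lemma restrict_range_sub_one_pow (hp : Function.Surjective p) (hB : IsProdTwoInvolutions B)
    (hpA : ∀ x, p (A x) = B (p x)) (hker : ∀ x, p x = 0 → A x = x) {m : ℕ} (hm : m ≠ 0)
    (hc : Disjoint (LinearMap.ker ((A - 1) ^ m)) (LinearMap.range ((A - 1) ^ m)))
    (hR : ∀ x ∈ LinearMap.range ((A - 1) ^ m), A x ∈ LinearMap.range ((A - 1) ^ m)) :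
    IsProdTwoInvolutions (A.restrict hR) := by
  obtain ⟨J, hJ, hJB⟩ := iff_exists_involution.1 hB
  have hpow (k : ℕ) (x : V) : p (((A - 1) ^ k) x) = ((B - 1) ^ k) (p x) := by
    induction k generalizing x with
    | zero => simp
    | succ k ih => rw [pow_succ, pow_succ, Module.End.mul_apply, ih]; simp [hpA]
  refine of_injective (f := p ∘ₗ (LinearMap.range ((A - 1) ^ m)).subtype) ?_
    (fun x => hpA x) hJ hJB ?_
  · refine (injective_iff_map_eq_zero _).2 fun x hx => Subtype.ext ?_
    refine Submodule.disjoint_def.1 hc x (Module.End.pow_map_zero_of_le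
      (Nat.one_le_iff_ne_zero.2 hm) ?_) x.2
    rw [pow_one, LinearMap.sub_apply, hker x hx, Module.End.one_apply, sub_self]
  · rintro ⟨_, x, rfl⟩
    obtain ⟨D, hD⟩ := exists_mul_sub_one_pow_comm hJ hJB m
    obtain ⟨y, hy⟩ := hp (D (p x))
    refine ⟨⟨((A - 1) ^ m) y, y, rfl⟩, ?_⟩
    simp only [LinearMap.comp_apply, Submodule.subtype_apply, hpow, hy]
    exact (LinearMap.congr_fun hD (p x)).symm

-- Fitting decomposition of `A - 1`: `A` is unipotent on the kernel of a high power, while `p` is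
-- injective on its range and embeds it as a subspace preserved by the involutions of `B`.
lemma of_surjective [FiniteDimensional F V] (h2 : (2 : F) ≠ 0) (hp : Function.Surjective p)
    (hB : IsProdTwoInvolutions B) (hpA : ∀ x, p (A x) = B (p x))
    (hker : ∀ x, p x = 0 → A x = x) : IsProdTwoInvolutions A := by
  obtain ⟨m, hm, hm0⟩ := ((LinearMap.eventually_isCompl_ker_pow_range_pow (A - 1)).and
    (Filter.eventually_ne_atTop 0)).exists
  have hcomm (x : V) : ((A - 1) ^ m) (A x) = A (((A - 1) ^ m) x) := LinearMap.congr_fun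
    (((Commute.refl A).sub_right (Commute.one_right A)).pow_right m).eq.symm x
  have hK : ∀ x ∈ LinearMap.ker ((A - 1) ^ m), A x ∈ LinearMap.ker ((A - 1) ^ m) := fun x hx => by
    rw [LinearMap.mem_ker, hcomm, LinearMap.mem_ker.1 hx, map_zero]
  have hR : ∀ x ∈ LinearMap.range ((A - 1) ^ m), A x ∈ LinearMap.range ((A - 1) ^ m) := by
    rintro _ ⟨x, rfl⟩
    exact ⟨A x, hcomm x⟩
  refine of_isCompl hm hK hR (of_isNilpotent_sub_one h2 ⟨m, ?_⟩)
    (restrict_range_sub_one_pow hp hB hpA hker hm0 hm.disjoint hR)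
  have hval (k : ℕ) (x : LinearMap.ker ((A - 1) ^ m)) :
      (((A.restrict hK - 1) ^ k) x : V) = ((A - 1) ^ k) x := by
    induction k generalizing x with
    | zero => rfl
    | succ k ih => rw [pow_succ, pow_succ, Module.End.mul_apply, ih]; rfl
  exact LinearMap.ext fun x => Subtype.ext ((hval m x).trans x.2)

end IsProdTwoInvolutions

end Unipotent

section TraceForm

variable {F V : Type*} [Field F] [AddCommGroup V] [Module F V]

lemma exists_dual_family {ι : Type*} [DecidableEq ι] {v : ι → V} (hv : LinearIndependent F v) :
    ∃ f : ι → Module.Dual F V, ∀ i j, f i (v j) = if i = j then 1 else 0 := by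
  obtain ⟨g, hg⟩ := LinearMap.exists_extend (hv.repr : _ →ₗ[F] (ι →₀ F))
  refine ⟨fun i ↦ Finsupp.lapply i ∘ₗ g, fun i j ↦ ?_⟩
  have hgj : g (v j) = Finsupp.single j 1 :=
    (LinearMap.congr_fun hg ⟨v j, Submodule.subset_span ⟨j, rfl⟩⟩).trans
      (hv.repr_eq_single j _ rfl)
  simp [hgj, Finsupp.single_apply, eq_comm]

lemma exists_dual_pair {v w : V} (hvw : LinearIndependent F ![v, w]) :
    ∃ f g : Module.Dual F V, f v = 1 ∧ f w = 0 ∧ g v = 0 ∧ g w = 1 := by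
  obtain ⟨f, hf⟩ := exists_dual_family hvw
  exact ⟨f 0, f 1, hf 0 0, hf 0 1, hf 1 0, hf 1 1⟩

lemma linearIndependent_smulRight {ι : Type*} {z : ι → V} (hz : LinearIndependent F z)
    {g : ι → Module.Dual F V} (hg : ∀ i, g i ≠ 0) :
    LinearIndependent F fun i ↦ ((g i).smulRight (z i) : Module.End F V) := by
  rw [linearIndependent_iff'] at hz ⊢
  intro s c hc i hi
  by_contra hci
  refine hg i (LinearMap.ext fun v ↦ ?_)
  have hv := hz s (fun i ↦ c i * g i v)
    (by simpa [smul_smul, LinearMap.sum_apply] using LinearMap.congr_fun hc v) i hi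
  exact (mul_eq_zero.1 hv).resolve_left hci

lemma exists_basis_mem_of_span_eq_top [FiniteDimensional F V] {s : Set V}
    (hs : Submodule.span F s = ⊤) :
    ∃ b : Module.Basis (Fin (Module.finrank F V)) F V, ∀ i, b i ∈ s := by
  let b := Module.Basis.ofSpan hs.ge
  refine ⟨b.reindex (b.indexEquiv (Module.finBasis F V)), fun i ↦ ?_⟩
  rw [Module.Basis.reindex_apply]
  exact Module.Basis.ofSpan_subset hs.ge ⟨_, rfl⟩

lemma exists_dual_comp_eq_on {E E' : Type*} [AddCommGroup E] [Module F E] [AddCommGroup E']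
    [Module F E'] {p : Submodule F E} {φ : E →ₗ[F] E'} {ξ : Module.Dual F E}
    (h : ∀ x ∈ p, φ x = 0 → ξ x = 0) : ∃ η : Module.Dual F E', ∀ x ∈ p, η (φ x) = ξ x := by
  have hξ : ξ.domRestrict p ∈ LinearMap.range (φ.domRestrict p).dualMap := by
    rw [LinearMap.range_dualMap_eq_dualAnnihilator_ker, Submodule.mem_dualAnnihilator]
    exact fun x hx ↦ h x x.2 hx
  obtain ⟨η, hη⟩ := hξ
  exact ⟨η, fun x hx ↦ LinearMap.congr_fun hη ⟨x, hx⟩⟩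

variable (F V) in
/-- The trace form `(X, Y) ↦ tr (X Y)` on the endomorphisms of a vector space, used to identify
linear functionals on `End V` with elements of `End V`. -/
noncomputable def endTraceForm : LinearMap.BilinForm F (Module.End F V) :=
  (LinearMap.mul F (Module.End F V)).compr₂ (LinearMap.trace F V)

lemma endTraceForm_apply (X Y : Module.End F V) :
    endTraceForm F V X Y = LinearMap.trace F V (X * Y) := rfl

lemma endTraceForm_isRefl : (endTraceForm F V).IsRefl := fun X Y h ↦ by
  rwa [endTraceForm_apply, LinearMap.trace_mul_comm]

variable [FiniteDimensional F V]

lemma trace_mul_smulRight (G : Module.End F V) (g : Module.Dual F V) (z : V) :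
    LinearMap.trace F V (G * g.smulRight z) = g (G z) := by
  rw [show G * g.smulRight z = g.smulRight (G z) by ext; simp, LinearMap.trace_smulRight]

lemma endTraceForm_nondegenerate : (endTraceForm F V).Nondegenerate := by
  have hrefl : LinearMap.IsRefl (endTraceForm F V) := endTraceForm_isRefl
  refine hrefl.nondegenerate_iff_separatingLeft.2 fun X hX ↦
    LinearMap.ext fun v ↦ (Module.forall_dual_apply_eq_zero_iff F _).1 fun g ↦ ?_
  rw [← trace_mul_smulRight, ← endTraceForm_apply, hX]

lemma exists_forall_eq_trace_mul (φ : Module.Dual F (Module.End F V)) :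
    ∃ X : Module.End F V, ∀ G, φ G = LinearMap.trace F V (G * X) :=
  ⟨(endTraceForm F V).toDual endTraceForm_nondegenerate |>.symm φ, fun G ↦ by
    rw [LinearMap.trace_mul_comm, ← endTraceForm_apply,
      LinearMap.BilinForm.apply_toDual_symm_apply]⟩

lemma exists_isProdTwoInvolutions_apply_eq_trace_eq {w u : V} (hwu : LinearIndependent F ![w, u])
    (c : F) :
    ∃ A : Module.End F V, IsProdTwoInvolutions A ∧ A w = u ∧ LinearMap.trace F V A = c := by
  obtain ⟨f, g, hfw, hfu, hgw, hgu⟩ := exists_dual_pair hwu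
  set t : F := c - (Module.finrank F V - 2) with ht
  let A : Module.End F V := 1 + f.smulRight (u - w) + g.smulRight (t • u - u - w)
  let J : Module.End F V := 1 + f.smulRight (u - w) + g.smulRight (w - u)
  refine ⟨A, IsProdTwoInvolutions.iff_exists_involution.2 ⟨J, ?_, ?_⟩, ?_, ?_⟩
  · ext v
    simp only [J, Module.End.mul_apply, LinearMap.add_apply, Module.End.one_apply,
      LinearMap.smulRight_apply, map_add, map_smul, map_sub, hfw, hfu, hgw, hgu]
    module
  · ext v
    simp only [A, J, Module.End.mul_apply, LinearMap.add_apply, Module.End.one_apply,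
      LinearMap.smulRight_apply, map_add, map_smul, map_sub, hfw, hfu, hgw, hgu]
    module
  · simp only [A, LinearMap.add_apply, Module.End.one_apply, LinearMap.smulRight_apply, hfw, hgw]
    module
  · simp only [A, map_add, LinearMap.trace_smulRight, LinearMap.trace_one, map_sub, map_smul,
      hfw, hfu, hgw, hgu, smul_eq_mul, ht]
    ring

lemma exists_isProdTwoInvolutions_trace_eq (hV : 2 ≤ Module.finrank F V) (c : F) :
    ∃ A : Module.End F V, IsProdTwoInvolutions A ∧ LinearMap.trace F V A = c := by
  have : Nontrivial V := Module.nontrivial_of_finrank_pos (R := F) (by lia)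
  obtain ⟨w, hw⟩ := exists_ne (0 : V)
  obtain ⟨u, hwu⟩ := exists_linearIndependent_pair_of_one_lt_finrank hV hw
  obtain ⟨A, hA, -, hAc⟩ := exists_isProdTwoInvolutions_apply_eq_trace_eq hwu c
  exact ⟨A, hA, hAc⟩

end TraceForm

section KernelProjection

variable {F V : Type*} [Field F] [AddCommGroup V] [Module F V] {f : Module.Dual F V} {z : V}

/-- The endomorphisms having `z` as an eigenvector (or `z = 0`). -/
def eigenAt (F : Type*) {V : Type*} [Field F] [AddCommGroup V] [Module F V] (z : V) :
    Submodule F (Module.End F V) :=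
  (Submodule.span F {z}).comap (LinearMap.applyₗ z)

lemma mem_eigenAt {G : Module.End F V} : G ∈ eigenAt F z ↔ ∃ c : F, c • z = G z := by
  simp [eigenAt, Submodule.mem_span_singleton]

/-- The projection onto the hyperplane `ker f` along a vector `z` with `f z = 1`. -/
def kerProj (hz : f z = 1) : V →ₗ[F] LinearMap.ker f :=
  (LinearMap.id - f.smulRight z).codRestrict _ fun v ↦ by simp [hz]

@[simp]
lemma coe_kerProj (hz : f z = 1) (v : V) : (kerProj hz v : V) = v - f v • z := rfl

@[simp]
lemma kerProj_coe (hz : f z = 1) (v : LinearMap.ker f) : kerProj hz v = v := by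
  ext
  simp [LinearMap.mem_ker.1 v.2]

@[simp]
lemma kerProj_self (hz : f z = 1) : kerProj hz z = 0 := by
  ext
  simp [hz]

lemma kerProj_eq_zero_iff (hz : f z = 1) {v : V} : kerProj hz v = 0 ↔ f v • z = v := by
  rw [Subtype.ext_iff, coe_kerProj, ZeroMemClass.coe_zero, sub_eq_zero, eq_comm]

/-- The compression of an endomorphism to the hyperplane `ker f` along `z`: the lower right block
with respect to the decomposition of the space into the line through `z` and `ker f`. -/
def compress (hz : f z = 1) : Module.End F V →ₗ[F] Module.End F (LinearMap.ker f) :=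
  LinearMap.llcomp F _ _ _ (kerProj hz) ∘ₗ LinearMap.lcomp F V (LinearMap.ker f).subtype

lemma compress_apply (hz : f z = 1) (G : Module.End F V) (v : LinearMap.ker f) :
    compress hz G v = kerProj hz (G v) := rfl

@[simp]
lemma compress_one (hz : f z = 1) : compress hz (1 : Module.End F V) = 1 := by
  ext1 v
  simp [compress_apply]

lemma eq_smulRight_of_compress_eq_zero (hz : f z = 1) {G : Module.End F V} (hG : G ∈ eigenAt F z)
    (hG0 : compress hz G = 0) : G = (f ∘ₗ G).smulRight z := by
  obtain ⟨c, hc⟩ := mem_eigenAt.1 hG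
  ext v
  have hv : kerProj hz (G (kerProj hz v)) = 0 := LinearMap.congr_fun hG0 (kerProj hz v)
  rw [coe_kerProj, map_sub, map_smul, ← hc, map_sub, map_smul, map_smul, kerProj_self, smul_zero,
    smul_zero, sub_zero] at hv
  exact ((kerProj_eq_zero_iff hz).1 hv).symm

/-- The endomorphism fixing `z` with compression `A` to `ker f` along `z`, whose first row is given
by the functional `y` on `ker f`. -/
def extendKer (hz : f z = 1) (y : Module.Dual F (LinearMap.ker f))
    (A : Module.End F (LinearMap.ker f)) : Module.End F V :=
  (f + y ∘ₗ kerProj hz).smulRight z + (LinearMap.ker f).subtype ∘ₗ A ∘ₗ kerProj hz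

variable (y : Module.Dual F (LinearMap.ker f)) {A : Module.End F (LinearMap.ker f)}

lemma extendKer_apply (hz : f z = 1) (v : V) :
    extendKer hz y A v = (f v + y (kerProj hz v)) • z + A (kerProj hz v) := rfl

variable [FiniteDimensional F V]

lemma IsProdTwoInvolutions.extendKer (h2 : (2 : F) ≠ 0) (hz : f z = 1)
    (hA : IsProdTwoInvolutions A) : IsProdTwoInvolutions (extendKer hz y A) := by
  refine .of_surjective h2 (p := kerProj hz) (fun v ↦ ⟨v, kerProj_coe hz v⟩) hA (fun v ↦ ?_)
    fun v hv ↦ ?_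
  · simp [extendKer_apply]
  · simp [extendKer_apply, hv, (kerProj_eq_zero_iff hz).1 hv]

lemma trace_mul_extendKer (hz : f z = 1) (G : Module.End F V) :
    LinearMap.trace F V (G * extendKer hz y A) =
      f (G z) + y (kerProj hz (G z)) + LinearMap.trace F _ (compress hz G * A) := by
  have hA : LinearMap.trace F V (G * ((LinearMap.ker f).subtype ∘ₗ A ∘ₗ kerProj hz)) =
      LinearMap.trace F _ (compress hz G * A) :=
    LinearMap.trace_comp_comm' (kerProj hz) (G ∘ₗ (LinearMap.ker f).subtype ∘ₗ A)
  rw [_root_.extendKer, mul_add, map_add, trace_mul_smulRight, hA, LinearMap.add_apply,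
    LinearMap.comp_apply]

end KernelProjection

section TraceRealizable

variable {F V : Type*} [Field F] [AddCommGroup V] [Module F V]

/-- Some product of two involutions pairs under the trace with the elements of `𝒢` exactly as `X`
does. For `X = 0` this says that `𝒢ᗮ` contains a product of two involutions. -/
def TraceRealizable (𝒢 : Submodule F (Module.End F V)) (X : Module.End F V) : Prop :=
  ∃ A : Module.End F V, IsProdTwoInvolutions A ∧
    ∀ G ∈ 𝒢, LinearMap.trace F V (G * A) = LinearMap.trace F V (G * X)

variable [FiniteDimensional F V]

lemma TraceRealizable.of_ker (h2 : (2 : F) ≠ 0) {f : Module.Dual F V} {z : V} (hz : f z = 1)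
    {𝒢 : Submodule F (Module.End F V)} {X : Module.End F V}
    (hker : ∀ X', TraceRealizable ((𝒢 ⊓ eigenAt F z).map (compress hz)) X')
    (hX : ∀ g : Module.Dual F V, g.smulRight z ∈ 𝒢 → g z = g (X z)) : TraceRealizable 𝒢 X := by
  let τ : Module.Dual F (Module.End F V) :=
    (endTraceForm F V).flip X - f ∘ₗ LinearMap.applyₗ z
  have hτ (G) : τ G = LinearMap.trace F V (G * X) - f (G z) := rfl
  obtain ⟨η, hη⟩ : ∃ η : Module.Dual F (Module.End F (LinearMap.ker f)),
      ∀ G ∈ 𝒢 ⊓ eigenAt F z, η (compress hz G) = τ G := by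
    refine exists_dual_comp_eq_on fun G hG hG0 ↦ ?_
    have hGf := eq_smulRight_of_compress_eq_zero hz hG.2 hG0
    have htr : LinearMap.trace F V (G * X) = (f ∘ₗ G) (X z) := by
      rw [← trace_mul_smulRight, ← hGf, LinearMap.trace_mul_comm]
    rw [hτ, htr, ← hX _ (hGf ▸ hG.1), LinearMap.comp_apply, sub_self]
  obtain ⟨X', hX'⟩ := exists_forall_eq_trace_mul η
  obtain ⟨A, hA, hAX'⟩ := hker X'
  obtain ⟨y, hy⟩ : ∃ y : Module.Dual F (LinearMap.ker f), ∀ G ∈ 𝒢, y (kerProj hz (G z)) =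
      (τ - (endTraceForm F _).flip A ∘ₗ compress hz) G := by
    refine exists_dual_comp_eq_on (φ := kerProj hz ∘ₗ LinearMap.applyₗ z) fun G hG hG0 ↦ ?_
    have hGz : G ∈ eigenAt F z := mem_eigenAt.2 ⟨_, (kerProj_eq_zero_iff hz).1 hG0⟩
    rw [LinearMap.sub_apply, ← hη G ⟨hG, hGz⟩, hX', ← hAX' _ ⟨G, ⟨hG, hGz⟩, rfl⟩]
    exact sub_self _
  refine ⟨extendKer hz y A, hA.extendKer y h2 hz, fun G hG ↦ ?_⟩
  have hyG : y (kerProj hz (G z)) = LinearMap.trace F V (G * X) - f (G z) -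
      LinearMap.trace F _ (compress hz G * A) := hy G hG
  rw [trace_mul_extendKer, hyG]
  ring

end TraceRealizable

section Quadratic

variable {F V : Type*} [Field F] [AddCommGroup V] [Module F V]

lemma eq_zero_of_parallelogram (h2 : (2 : F) ≠ 0) {P : Submodule F V} (hP : P ≠ ⊤) {Q : V → F}
    (hQ : ∀ x y, Q (x + y) + Q (x - y) = 2 * (Q x + Q y)) (hQP : ∀ x ∉ P, Q x = 0) (v : V) :
    Q v = 0 := by
  by_cases hv : v ∈ P
  · obtain ⟨z, hz⟩ : ∃ z, z ∉ P := SetLike.exists_not_mem_of_ne_top P hP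
    have h := hQ z v
    rw [hQP z hz, hQP (z + v) ((P.add_mem_iff_left hv).not.2 hz),
      hQP (z - v) ((P.sub_mem_iff_left hv).not.2 hz), zero_add, zero_add] at h
    exact (mul_eq_zero.1 h.symm).resolve_left h2
  · exact hQP v hv

lemma exists_eq_smul_one_of_mem_eigenAt (h2 : (2 : F) ≠ 0) {P : Submodule F V} (hP : P ≠ ⊤)
    {G : Module.End F V} (hG : ∀ z ∉ P, G ∈ eigenAt F z) : ∃ c : F, G = c • 1 := by
  refine LinearMap.exists_eq_smul_id_of_forall_notLinearIndependent fun v hv ↦ ?_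
  obtain ⟨q, r, hqv, hqG, -, hrG⟩ := exists_dual_pair hv
  have h := eq_zero_of_parallelogram h2 hP (Q := fun x ↦ q x * r (G x) - q (G x) * r x)
    (fun x y ↦ by simp only [map_add, map_sub]; ring) (fun x hx ↦ by
      obtain ⟨c, hc⟩ := mem_eigenAt.1 (hG x hx)
      simp only [← hc, map_smul, smul_eq_mul]
      ring) v
  simp [hqv, hqG, hrG] at h

variable [FiniteDimensional F V]

lemma span_smulRight_mem_ne_top {𝒢 : Submodule F (Module.End F V)}
    (h𝒢 : Module.finrank F 𝒢 < Module.finrank F V) :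
    Submodule.span F {z : V | ∃ g : Module.Dual F V, g ≠ 0 ∧ g.smulRight z ∈ 𝒢} ≠ ⊤ := by
  intro hspan
  obtain ⟨b, hb⟩ := exists_basis_mem_of_span_eq_top hspan
  choose g hg hg𝒢 using hb
  have hli : LinearIndependent F fun i ↦ (⟨_, hg𝒢 i⟩ : 𝒢) :=
    .of_comp 𝒢.subtype (linearIndependent_smulRight b.linearIndependent hg)
  exact h𝒢.not_ge (by simpa using hli.fintype_card_le_finrank)

lemma finrank_map_compress_add_one_le {𝒢 : Submodule F (Module.End F V)} {G : Module.End F V}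
    (hG : G ∈ 𝒢) {f : Module.Dual F V} {z : V} (hz : f z = 1) (hGz : G ∉ eigenAt F z) :
    Module.finrank F ((𝒢 ⊓ eigenAt F z).map (compress hz)) + 1 ≤ Module.finrank F 𝒢 :=
  (Nat.succ_le_succ (Submodule.finrank_map_le _ _)).trans <| Nat.succ_le_of_lt <|
    Submodule.finrank_lt_finrank_of_lt <| inf_le_left.lt_of_ne fun h ↦ hGz (h.ge hG).2

lemma finrank_ker_add_one {f : Module.Dual F V} {z : V} (hz : f z = 1) :
    Module.finrank F (LinearMap.ker f) + 1 = Module.finrank F V :=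
  Module.Dual.finrank_ker_add_one_of_ne_zero fun hf ↦ by simp [hf] at hz

end Quadratic

theorem TraceRealizable.of_finrank_lt {F V : Type*} [Field F] [AddCommGroup V] [Module F V]
    [FiniteDimensional F V] (h2 : (2 : F) ≠ 0) {𝒢 : Submodule F (Module.End F V)}
    (h𝒢 : Module.finrank F 𝒢 < Module.finrank F V) (X : Module.End F V) :
    TraceRealizable 𝒢 X := by
  induction hd : Module.finrank F V generalizing V with
  | zero => lia
  | succ d ih =>
    set P := Submodule.span F {z : V | ∃ g : Module.Dual F V, g ≠ 0 ∧ g.smulRight z ∈ 𝒢}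
    have hP : P ≠ ⊤ := span_smulRight_mem_ne_top h𝒢
    by_cases hcase : ∀ z ∉ P, ∀ G ∈ 𝒢, G ∈ eigenAt F z
    · have hscalar : ∀ G ∈ 𝒢, ∃ c : F, G = c • 1 := fun G hG ↦
        exists_eq_smul_one_of_mem_eigenAt h2 hP fun z hz ↦ hcase z hz G hG
      rcases d.eq_zero_or_pos with rfl | hd0
      · have h𝒢0 : 𝒢 = ⊥ := Submodule.finrank_eq_zero.1 (by lia)
        exact ⟨1, ⟨1, 1, by simp⟩, fun G hG ↦ by simp [(Submodule.mem_bot F).1 (h𝒢0 ▸ hG)]⟩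
      · obtain ⟨A, hA, hAX⟩ :=
          exists_isProdTwoInvolutions_trace_eq (V := V) (by lia) (LinearMap.trace F V X)
        refine ⟨A, hA, fun G hG ↦ ?_⟩
        obtain ⟨c, rfl⟩ := hscalar G hG
        simp [hAX]
    · push Not at hcase
      obtain ⟨z, hz, G, hG, hGz⟩ := hcase
      have hz0 : z ≠ 0 := (ne_of_mem_of_not_mem P.zero_mem hz).symm
      obtain ⟨f, hf⟩ := Module.Projective.exists_dual_eq_one F hz0
      have hker := finrank_ker_add_one hf
      have hmap := finrank_map_compress_add_one_le hG hf hGz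
      refine .of_ker h2 hf (fun X' ↦ ih (by lia) X' (by lia)) fun g hg ↦ ?_
      have hg0 : g = 0 := of_not_not fun hg0 ↦ hz (Submodule.subset_span ⟨g, hg0, hg⟩)
      simp [hg0]

section Planar

variable {F V : Type*} [Field F] [AddCommGroup V] [Module F V]

/-- The determinant of three functionals evaluated at three vectors. Its vanishing for all `p q r`
expresses the linear dependence of `x y z`. -/
def tripleDet (p q r : Module.Dual F V) (x y z : V) : F :=
  p x * (q y * r z - q z * r y) - p y * (q x * r z - q z * r x) + p z * (q x * r y - q y * r x)

/-- All the vectors `G z`, for `G ∈ 𝒢`, lie in a common plane through `z`. -/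
def IsPlanarAt (𝒢 : Submodule F (Module.End F V)) (z : V) : Prop :=
  ∀ A ∈ 𝒢, ∀ B ∈ 𝒢, ∀ p q r : Module.Dual F V, tripleDet p q r (A z) (B z) z = 0

/-- The vectors `z` spanning the range of a non-nilpotent endomorphism of rank one in `𝒢`; the
inductive argument of `TraceRealizable.of_ker` breaks down exactly at these vectors. -/
def exceptionalVectors (𝒢 : Submodule F (Module.End F V)) : Set V :=
  {z | ∃ g : Module.Dual F V, g z ≠ 0 ∧ g.smulRight z ∈ 𝒢}

variable {𝒢 : Submodule F (Module.End F V)} {z : V}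

lemma IsPlanarAt.of_finrank_le [FiniteDimensional F V]
    (h𝒢 : Module.finrank F 𝒢 ≤ Module.finrank F (𝒢 ⊓ eigenAt F z : Submodule F _) + 1) :
    IsPlanarAt 𝒢 z := by
  intro A hA B hB p q r
  by_cases hAz : A ∈ eigenAt F z
  · obtain ⟨c, hc⟩ := mem_eigenAt.1 hAz
    rw [← hc, tripleDet, map_smul, map_smul, map_smul]
    simp only [smul_eq_mul]
    ring
  · have hlt : 𝒢 ⊓ eigenAt F z < 𝒢 ⊓ eigenAt F z ⊔ Submodule.span F {A} :=
      le_sup_left.lt_of_ne fun h ↦ hAz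
        (h.ge (Submodule.mem_sup_right (Submodule.mem_span_singleton_self A))).2
    have hle : 𝒢 ⊓ eigenAt F z ⊔ Submodule.span F {A} ≤ 𝒢 :=
      sup_le inf_le_left ((Submodule.span_singleton_le_iff_mem _ _).2 hA)
    have hlt' := Submodule.finrank_lt_finrank_of_lt hlt
    rw [← Submodule.eq_of_le_of_finrank_le hle (by lia)] at hB
    obtain ⟨K, hK, L, hL, rfl⟩ := Submodule.mem_sup.1 hB
    obtain ⟨c, rfl⟩ := Submodule.mem_span_singleton.1 hL
    obtain ⟨d, hd⟩ := mem_eigenAt.1 hK.2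
    simp only [tripleDet, LinearMap.add_apply, LinearMap.smul_apply, ← hd, map_add, map_smul,
      smul_eq_mul]
    ring

lemma finrank_le_of_notMem_exceptionalVectors [FiniteDimensional F V] (h2 : (2 : F) ≠ 0)
    (h0 : ¬ TraceRealizable 𝒢 0) (hz : z ≠ 0) (hz𝒢 : z ∉ exceptionalVectors 𝒢) :
    Module.finrank F V ≤ Module.finrank F (𝒢 ⊓ eigenAt F z : Submodule F _) + 1 := by
  obtain ⟨f, hf⟩ := Module.Projective.exists_dual_eq_one F hz
  have hker := finrank_ker_add_one hf
  have hmap := Submodule.finrank_map_le (compress hf) (𝒢 ⊓ eigenAt F z)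
  refine le_of_not_gt fun hlt ↦ h0 (.of_ker h2 hf (fun X ↦ .of_finrank_lt h2 (by lia) X) ?_)
  intro g hg
  simpa using not_imp_comm.1 (fun hgz ↦ ⟨g, hgz, hg⟩) hz𝒢

lemma isPlanarAt_of_notMem_exceptionalVectors [FiniteDimensional F V] (h2 : (2 : F) ≠ 0)
    (h𝒢 : Module.finrank F 𝒢 ≤ Module.finrank F V) (h0 : ¬ TraceRealizable 𝒢 0)
    (hz𝒢 : z ∉ exceptionalVectors 𝒢) : IsPlanarAt 𝒢 z := by
  rcases eq_or_ne z 0 with rfl | hz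
  · intro A _ B _ p q r
    simp [tripleDet]
  · exact .of_finrank_le (h𝒢.trans (finrank_le_of_notMem_exceptionalVectors h2 h0 hz hz𝒢))

lemma exists_mulVec_mul_mulVec_ne_zero (h2 : (2 : F) ≠ 0) {ι : Type*} [Fintype ι]
    (hι : 2 < Fintype.card ι) {M : Matrix ι ι F} (hM : ∀ i, M i i ≠ 0) :
    ∃ c : ι → F, (∀ i, c i ≠ 0) ∧ ∃ i j, i ≠ j ∧ (M *ᵥ c) i * (M *ᵥ c) j ≠ 0 := by
  classical
  by_contra! hcon
  obtain ⟨i, j, hij, hi, hj⟩ : ∃ i j, i ≠ j ∧ (M *ᵥ 1) i = 0 ∧ (M *ᵥ 1) j = 0 := by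
    obtain ⟨i, j, k, hij, hik, hjk⟩ := Fintype.two_lt_card_iff.1 hι
    have hor := fun i j hij ↦ mul_eq_zero.1 (hcon 1 (by simp) i j hij)
    rcases hor i j hij with hi | hj
    · rcases hor j k hjk with hj | hk
      · exact ⟨i, j, hij, hi, hj⟩
      · exact ⟨i, k, hik, hi, hk⟩
    · rcases hor i k hik with hi | hk
      · exact ⟨i, j, hij, hi, hj⟩
      · exact ⟨j, k, hjk, hj, hk⟩
  have hflip : ∀ i k, (1 - Pi.single i 2 : ι → F) k ≠ 0 := fun i k ↦ by
    by_cases hk : k = i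
    · subst hk
      norm_num
    · simp [hk]
  have hflip₂ : ∀ k, (1 - Pi.single i 2 - Pi.single j 2 : ι → F) k ≠ 0 := fun k ↦ by
    by_cases hk : k = j
    · subst hk
      norm_num [hij.symm]
    · simpa [hk] using hflip i k
  have hji : M j i = 0 := by
    simpa [mulVec_sub, mulVec_single, hi, hj, h2, hM] using hcon _ (hflip i) i j hij
  have hij' : M i j = 0 := by
    simpa [mulVec_sub, mulVec_single, hi, hj, h2, hM] using hcon _ (hflip j) i j hij
  simpa [mulVec_sub, mulVec_single, hi, hj, h2, hM, hji, hij'] using hcon _ hflip₂ i j hij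

lemma smulRight_mem_of_mem_span {ι : Type*} [Finite ι] (b : Module.Basis ι F V)
    {g : ι → Module.Dual F V} {f : Module.Dual F V} (hz : ∀ i, b.repr z i ≠ 0)
    (hf : f.smulRight z ∈ Submodule.span F (Set.range fun i ↦ (g i).smulRight (b i))) (v : V) :
    f.smulRight v ∈ Submodule.span F (Set.range fun i ↦ (g i).smulRight (b i)) := by
  classical
  have := Fintype.ofFinite ι
  obtain ⟨d, hd⟩ := (Submodule.mem_span_range_iff_exists_fun F).1 hf
  have hcoord : ∀ i, d i • g i = b.repr z i • f := fun i ↦ by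
    ext u
    have hdu := congrArg (fun x ↦ b.repr x i) (LinearMap.congr_fun hd u)
    simpa [LinearMap.sum_apply, Finsupp.single_apply, mul_comm (f u)] using hdu
  have hfi : ∀ i, f = ((b.repr z i)⁻¹ * d i) • g i := fun i ↦ by
    rw [mul_smul, hcoord, inv_smul_smul₀ (hz i)]
  have hfv : f.smulRight v =
      ∑ i, (b.repr v i * ((b.repr z i)⁻¹ * d i)) • (g i).smulRight (b i) := by
    ext u
    conv_lhs => rw [LinearMap.smulRight_apply, ← b.sum_repr v, Finset.smul_sum]
    rw [LinearMap.sum_apply]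
    refine Finset.sum_congr rfl fun i _ ↦ ?_
    conv_lhs => rw [hfi i]
    simp only [LinearMap.smul_apply, LinearMap.smulRight_apply, smul_eq_mul]
    module
  rw [hfv]
  exact Submodule.sum_smul_mem _ _ fun i _ ↦ Submodule.subset_span ⟨i, rfl⟩

lemma exists_forall_smulRight_mem_of_span_exceptionalVectors_eq_top
    [FiniteDimensional F V] (h2 : (2 : F) ≠ 0)
    (hV : 2 < Module.finrank F V) (h𝒢 : Module.finrank F 𝒢 = Module.finrank F V)
    (hplanar : ∀ z ∉ exceptionalVectors 𝒢, IsPlanarAt 𝒢 z)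
    (hspan : Submodule.span F (exceptionalVectors 𝒢) = ⊤) :
    ∃ g : Module.Dual F V, g ≠ 0 ∧ ∀ z, g.smulRight z ∈ 𝒢 := by
  obtain ⟨b, hb⟩ := exists_basis_mem_of_span_eq_top hspan
  choose g hg hg𝒢 using hb
  have hli : LinearIndependent F fun i ↦ ((g i).smulRight (b i) : Module.End F V) :=
    linearIndependent_smulRight b.linearIndependent fun i hi ↦ hg i (by simp [hi])
  have h𝒢span : Submodule.span F (Set.range fun i ↦ (g i).smulRight (b i)) = 𝒢 := by
    refine Submodule.eq_of_le_of_finrank_le (Submodule.span_le.2 ?_) ?_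
    · rintro _ ⟨i, rfl⟩
      exact hg𝒢 i
    · rw [finrank_span_eq_card hli, h𝒢, Fintype.card_fin]
  obtain ⟨c, hc, i, j, hij, hne⟩ :=
    exists_mulVec_mul_mulVec_ne_zero h2 (by simpa) (M := .of fun i j ↦ g i (b j)) hg
  set z := ∑ k, c k • b k
  have hgz : ∀ i, (Matrix.of (fun i j ↦ g i (b j)) *ᵥ c) i = g i z := fun i ↦ by
    simp [z, mulVec, dotProduct, mul_comm]
  have hz : ∀ i, b.repr z i = c i := b.repr_sum_self c ▸ fun i ↦ rfl
  have hz𝒢 : z ∈ exceptionalVectors 𝒢 := by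
    by_contra hz𝒢
    obtain ⟨k, hk⟩ : ∃ k, k ∉ ({i, j} : Finset _) := by
      by_contra! hk
      exact hV.not_ge (Fintype.card_fin (Module.finrank F V) ▸
        (Finset.card_le_card fun k _ ↦ hk k).trans Finset.card_le_two)
    obtain ⟨hki, hkj⟩ : k ≠ i ∧ k ≠ j := by simpa using hk
    have hdet := hplanar z hz𝒢 _ (hg𝒢 i) _ (hg𝒢 j) (b.coord i) (b.coord j) (b.coord k)
    rw [hgz, hgz] at hne
    refine mul_ne_zero hne (hc k) ?_
    simpa [tripleDet, hz, Finsupp.single_apply, hij, hij.symm, hki, hkj, hki.symm,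
      hkj.symm, or_assoc] using hdet
  obtain ⟨f, hfz, hf𝒢⟩ := hz𝒢
  refine ⟨f, fun h ↦ hfz (by simp [h]), fun v ↦ ?_⟩
  rw [← h𝒢span] at hf𝒢 ⊢
  exact smulRight_mem_of_mem_span b (fun i ↦ hz i ▸ hc i) hf𝒢 v

lemma exists_exceptionalVectors_subset_span_singleton (h2 : (2 : F) ≠ 0)
    (hplanar : ∀ z ∉ exceptionalVectors 𝒢, IsPlanarAt 𝒢 z)
    (hspan : Submodule.span F (exceptionalVectors 𝒢) ≠ ⊤) :
    ∃ s : V, exceptionalVectors 𝒢 ⊆ Submodule.span F {s} := by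
  rcases (exceptionalVectors 𝒢).eq_empty_or_nonempty with hempty | ⟨s, hs⟩
  · exact ⟨0, hempty ▸ Set.empty_subset _⟩
  refine ⟨s, fun t ht ↦ of_not_not fun hst ↦ ?_⟩
  obtain ⟨g, hgs, hg𝒢⟩ := id hs
  obtain ⟨h, hht, hh𝒢⟩ := id ht
  have hs0 : s ≠ 0 := fun hs0 ↦ hgs (by simp [hs0])
  obtain ⟨p, q, hps, hpt, hqs, hqt⟩ := exists_dual_pair <| (LinearIndependent.pair_iff' hs0).2
    fun c hc ↦ hst (Submodule.mem_span_singleton.2 ⟨c, hc⟩)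
  have hmul := eq_zero_of_parallelogram h2 hspan (Q := fun z ↦ g z * h z)
    (fun x y ↦ by simp only [map_add, map_sub]; ring) fun z hz ↦ by
      obtain ⟨r, hrz, hr⟩ := Submodule.exists_le_ker_of_notMem hz
      have hrs : r s = 0 := hr (Submodule.subset_span hs)
      have hrt : r t = 0 := hr (Submodule.subset_span ht)
      have hdet := hplanar z (fun hz' ↦ hz (Submodule.subset_span hz')) _ hg𝒢 _ hh𝒢 p q r
      simpa [tripleDet, hps, hpt, hqs, hqt, hrs, hrt, hrz] using hdet
  have hhs : h s = 0 := (mul_eq_zero.1 (hmul s)).resolve_left hgs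
  have hgt : g t = 0 := (mul_eq_zero.1 (hmul t)).resolve_right hht
  have hst' := hmul (s + t)
  simp [hhs, hgt, hgs, hht] at hst'

end Planar

section PlanarEverywhere

variable {F V : Type*} [Field F] [AddCommGroup V] [Module F V]

lemma eq_smul_add_smul_of_forall_dual {z w v : V} {f g : Module.Dual F V} (hfz : f z = 1)
    (hfw : f w = 0) (hgz : g z = 0) (hgw : g w = 1)
    (h : ∀ p : Module.Dual F V, p z = 0 → p w = 0 → p v = 0) : v = f v • z + g v • w := by
  rw [← sub_eq_zero, ← Module.forall_dual_apply_eq_zero_iff F]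
  intro p
  have hp := h (p - p z • f - p w • g) (by simp [hfz, hgz]) (by simp [hfw, hgw])
  simp only [LinearMap.sub_apply, LinearMap.smul_apply, smul_eq_mul] at hp
  simp only [map_sub, map_add, map_smul, smul_eq_mul]
  linear_combination hp

lemma exists_dual_pair_apply_eq_zero [FiniteDimensional F V] (hV : 2 < Module.finrank F V)
    (s : V) : ∃ (f g : Module.Dual F V) (h k : V),
      f s = 0 ∧ g s = 0 ∧ f h = 1 ∧ f k = 0 ∧ g h = 0 ∧ g k = 1 := by
  have hspan : Module.finrank F (Submodule.span F {s}) ≤ 1 := by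
    simpa using finrank_span_le_card (R := F) ({s} : Set V)
  have hquot := (Submodule.span F {s}).finrank_quotient_add_finrank
  have : Nontrivial (V ⧸ Submodule.span F {s}) :=
    Module.nontrivial_of_finrank_pos (R := F) (by lia)
  obtain ⟨h', hh'⟩ := exists_ne (0 : V ⧸ Submodule.span F {s})
  obtain ⟨k', hhk'⟩ := exists_linearIndependent_pair_of_one_lt_finrank (R := F) (by lia) hh'
  obtain ⟨h, rfl⟩ := Submodule.mkQ_surjective _ h'
  obtain ⟨k, rfl⟩ := Submodule.mkQ_surjective _ k'
  obtain ⟨f, g, hfh, hfk, hgh, hgk⟩ := exists_dual_pair hhk'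
  have hs : (Submodule.span F {s}).mkQ s = 0 := by simp
  exact ⟨f ∘ₗ Submodule.mkQ _, g ∘ₗ Submodule.mkQ _, h, k, by rw [LinearMap.comp_apply, hs,
    map_zero], by rw [LinearMap.comp_apply, hs, map_zero], hfh, hfk, hgh, hgk⟩

lemma exists_dual_apply_ne_zero_of_two_lt_finrank [FiniteDimensional F V]
    (hV : 2 < Module.finrank F V) (z w : V) :
    ∃ (p : Module.Dual F V) (v : V), p z = 0 ∧ p w = 0 ∧ p v ≠ 0 := by
  classical
  have hspan : Submodule.span F {z, w} < ⊤ := by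
    refine Submodule.lt_top_of_finrank_lt_finrank (lt_of_le_of_lt ?_ hV)
    rw [← Finset.coe_pair]
    exact (finrank_span_finset_le_card (R := F) ({z, w} : Finset V)).trans Finset.card_le_two
  obtain ⟨v, -, hv⟩ := SetLike.exists_of_lt hspan
  obtain ⟨p, hpv, hp⟩ := Submodule.exists_le_ker_of_notMem hv
  exact ⟨p, v, hp (Submodule.subset_span (by simp)), hp (Submodule.subset_span (by simp)), hpv⟩

-- The identity `hQ` holds for every homogeneous cubic map `Q`.
lemma eq_zero_of_cubic [FiniteDimensional F V] (h2 : (2 : F) ≠ 0)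
    (hV : 2 < Module.finrank F V) {Q : V → F} {s : V}
    (hQ : ∀ x h k, 4 * Q x = 2 * (Q (x + h) + Q (x - h) + Q (x + k) + Q (x - k)) -
      (Q (x + h + k) + Q (x - h - k) + Q (x + h - k) + Q (x - h + k)))
    (hQs : ∀ x ∉ Submodule.span F {s}, Q x = 0) (x : V) : Q x = 0 := by
  by_cases hx : x ∈ Submodule.span F {s}
  · obtain ⟨f, g, h, k, hfs, hgs, hfh, hfk, -, hgk⟩ := exists_dual_pair_apply_eq_zero hV s
    obtain ⟨c, rfl⟩ := Submodule.mem_span_singleton.1 hx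
    have hQf : ∀ y, f y ≠ 0 → Q y = 0 := fun y hy ↦ hQs y fun hys ↦ hy <| by
      obtain ⟨d, rfl⟩ := Submodule.mem_span_singleton.1 hys
      simp [hfs]
    have hQg : ∀ y, g y ≠ 0 → Q y = 0 := fun y hy ↦ hQs y fun hys ↦ hy <| by
      obtain ⟨d, rfl⟩ := Submodule.mem_span_singleton.1 hys
      simp [hgs]
    have h4 : (2 * 2) * Q (c • s) = 0 := by
      have hsum := hQ (c • s) h k
      rw [hQf (c • s + h), hQf (c • s - h), hQg (c • s + k), hQg (c • s - k),
        hQf (c • s + h + k), hQf (c • s - h - k), hQf (c • s + h - k), hQf (c • s - h + k)] at hsum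
      · linear_combination hsum
      all_goals simp [hfs, hfh, hfk, hgs, hgk]
    exact (mul_eq_zero.1 h4).resolve_left (mul_ne_zero h2 h2)
  · exact hQs x hx

lemma isPlanarAt_of_forall_notMem_span_singleton [FiniteDimensional F V] (h2 : (2 : F) ≠ 0)
    (hV : 2 < Module.finrank F V) {𝒢 : Submodule F (Module.End F V)} {s : V}
    (h𝒢 : ∀ z ∉ Submodule.span F {s}, IsPlanarAt 𝒢 z) (z : V) : IsPlanarAt 𝒢 z :=
  fun A hA B hB p q r ↦ eq_zero_of_cubic h2 hV (Q := fun x ↦ tripleDet p q r (A x) (B x) x)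
    (fun x h k ↦ by simp only [tripleDet, map_add, map_sub]; ring)
    (fun x hx ↦ h𝒢 x hx A hA B hB p q r) z

lemma tripleDet_eq_zero_of_apply_eq_zero (h2 : (2 : F) ≠ 0) {K G : Module.End F V}
    (hKG : ∀ (p q r : Module.Dual F V) (x : V), tripleDet p q r (K x) (G x) x = 0) {z : V}
    (hKz : K z = 0) (p q r : Module.Dual F V) (h : V) :
    tripleDet p q r (K h) (G z) z = 0 ∧
      tripleDet p q r (K h) (G z) h + tripleDet p q r (K h) (G h) z = 0 := by
  have hadd := hKG p q r (z + h)
  have hsub := hKG p q r (z - h)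
  have hh := hKG p q r h
  simp only [tripleDet, map_add, map_sub, map_neg, hKz, zero_add, zero_sub] at hadd hsub hh ⊢
  constructor <;> apply mul_left_cancel₀ h2
  · linear_combination hadd - hsub - 2 * hh
  · linear_combination hadd + hsub

lemma exists_eq_smulRight_of_tripleDet_eq_zero [FiniteDimensional F V] (h2 : (2 : F) ≠ 0)
    (hV : 2 < Module.finrank F V) {K G : Module.End F V}
    (hKG : ∀ (p q r : Module.Dual F V) (x : V), tripleDet p q r (K x) (G x) x = 0) {z : V}
    (hKz : K z = 0) (hz : LinearIndependent F ![z, G z]) :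
    ∃ (w : V) (b : Module.Dual F V), w ≠ 0 ∧ K = b.smulRight w := by
  obtain ⟨f, g, hfz, hfw, hgz, hgw⟩ := exists_dual_pair hz
  have hK : ∀ h, K h = f (K h) • z + g (K h) • G z := fun h ↦
    eq_smul_add_smul_of_forall_dual hfz hfw hgz hgw fun p hpz hpw ↦ by
      simpa [tripleDet, hfz, hfw, hgz, hgw, hpz, hpw] using
        (tripleDet_eq_zero_of_apply_eq_zero h2 hKG hKz f g p h).1
  have hpK : ∀ (p : Module.Dual F V) h, p z = 0 → p (G z) = 0 → p (K h) = 0 :=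
    fun p h hpz hpw ↦ by rw [hK]; simp [hpz, hpw]
  have hpol : ∀ (p : Module.Dual F V) h, p z = 0 → p (G z) = 0 →
      f (K h) * p h + g (K h) * p (G h) = 0 := fun p h hpz hpw ↦ by
    have hh := (tripleDet_eq_zero_of_apply_eq_zero h2 hKG hKz f g p h).2
    simp only [tripleDet, hfz, hfw, hgz, hgw, hpz, hpw, hpK p h hpz hpw] at hh
    linear_combination hh
  have hker : ∀ h, g (K h) = 0 → f (K h) = 0 := fun h hgh ↦ by
    by_contra hfh
    have hph : ∀ p : Module.Dual F V, p z = 0 → p (G z) = 0 → p h = 0 := fun p hpz hpw ↦ by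
      simpa [hgh, hfh] using hpol p h hpz hpw
    have hpG : ∀ p : Module.Dual F V, p z = 0 → p (G z) = 0 → p (G h) = 0 := fun p hpz hpw ↦ by
      have hdet := hKG f g p h
      simp only [tripleDet, hgh, hpK p h hpz hpw, hph p hpz hpw] at hdet
      have hgh0 : g h ≠ 0 := fun hgh0 ↦ hfh <| by
        rw [eq_smul_add_smul_of_forall_dual hfz hfw hgz hgw hph]
        simp [hgh0, hKz]
      refine (mul_eq_zero.1 ?_).resolve_left (mul_ne_zero hfh hgh0)
      linear_combination -hdet
    obtain ⟨p, k, hpz, hpw, hpk⟩ := exists_dual_apply_ne_zero_of_two_lt_finrank hV z (G z)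
    have hsum := hpol p (h + k) hpz hpw
    have hk := hpol p k hpz hpw
    simp only [map_add, hgh, hph p hpz hpw, hpG p hpz hpw] at hsum
    refine mul_ne_zero hfh hpk ?_
    linear_combination hsum - hk
  obtain ⟨η, hη⟩ := exists_dual_comp_eq_on (p := ⊤) (φ := g ∘ₗ K) (ξ := f ∘ₗ K) fun h _ ↦ hker h
  refine ⟨η 1 • z + G z, g ∘ₗ K, fun h0 ↦ ?_, ?_⟩
  · simpa [hgz, hgw] using congrArg g h0
  · ext h
    have hf : f (K h) = g (K h) * η 1 := by
      rw [← smul_eq_mul, ← map_smul, smul_eq_mul, mul_one]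
      exact (hη h trivial).symm
    rw [hK h, hf, LinearMap.smulRight_apply, LinearMap.comp_apply]
    module

lemma exists_eq_smul_one_add_smulRight_of_tripleDet_eq_zero [FiniteDimensional F V]
    (hV : 2 < Module.finrank F V) {w : V} (hw : w ≠ 0) {G : Module.End F V}
    (hG : ∀ (p q r : Module.Dual F V) (x : V), tripleDet p q r w (G x) x = 0) :
    ∃ (μ : F) (g : Module.Dual F V), G = μ • 1 + g.smulRight w := by
  obtain ⟨f, hf⟩ := Module.Projective.exists_dual_eq_one F hw
  have hker := finrank_ker_add_one hf
  have hdep : ∀ (q r : Module.Dual F (LinearMap.ker f)) (x : V),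
      q (kerProj hf (G x)) * r (kerProj hf x) = q (kerProj hf x) * r (kerProj hf (G x)) :=
    fun q r x ↦ by
      have hdet := hG f (q ∘ₗ kerProj hf) (r ∘ₗ kerProj hf) x
      simp only [tripleDet, LinearMap.comp_apply, kerProj_self, hf, map_zero] at hdet
      linear_combination hdet
  obtain ⟨μ, hμ⟩ : ∃ μ : F, compress hf G = μ • 1 := by
    refine LinearMap.exists_eq_smul_id_of_forall_notLinearIndependent fun x hx ↦ ?_
    obtain ⟨q, r, hqx, hqG, -, hrG⟩ := exists_dual_pair hx
    have hx' := hdep q r x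
    rw [compress_apply] at hqG hrG
    simp [hqx, hqG, hrG] at hx'
  have hGw : kerProj hf (G w) = 0 := by
    by_contra hGw
    obtain ⟨x, hx⟩ := exists_linearIndependent_pair_of_one_lt_finrank (R := F) (by lia) hGw
    obtain ⟨q, r, hqG, hqx, hrG, hrx⟩ := exists_dual_pair hx
    have hsum := hdep q r (w + x)
    have hx' := hdep q r x
    simp only [map_add, kerProj_self, kerProj_coe, zero_add, hqG, hqx, hrG, hrx] at hsum hx'
    refine one_ne_zero (α := F) ?_
    linear_combination hsum - hx'
  refine ⟨μ, f ∘ₗ (G - μ • 1), ?_⟩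
  rw [← sub_eq_iff_eq_add']
  refine eq_smulRight_of_compress_eq_zero hf ?_ ?_
  · refine mem_eigenAt.2 ⟨f ((G - μ • 1) w), (kerProj_eq_zero_iff hf).1 ?_⟩
    simp [hGw]
  · rw [map_sub, map_smul, hμ, compress_one, sub_self]

variable {𝒢 : Submodule F (Module.End F V)}

lemma exists_mem_notMem_span_one {𝒦 : Submodule F (Module.End F V)}
    (h𝒦 : 1 < Module.finrank F 𝒦) : ∃ K ∈ 𝒦, K ∉ Submodule.span F {(1 : Module.End F V)} := by
  by_contra! hle
  have hspan := Submodule.finrank_mono (show 𝒦 ≤ Submodule.span F {1} from hle)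
  have hone := finrank_span_le_card (R := F) ({1} : Set (Module.End F V))
  rw [Set.toFinset_singleton, Finset.card_singleton] at hone
  lia

lemma tripleDet_eq_zero_of_smul_one_add_smulRight_mem (h2 : (2 : F) ≠ 0)
    (hplanar : ∀ z, IsPlanarAt 𝒢 z) {c : F} {b : Module.Dual F V} {w : V} (hb : b ≠ 0)
    (hbw : c • 1 + b.smulRight w ∈ 𝒢) {G : Module.End F V} (hG : G ∈ 𝒢)
    (p q r : Module.Dual F V) (x : V) : tripleDet p q r w (G x) x = 0 := by
  have hker : LinearMap.ker b ≠ ⊤ := LinearMap.ker_eq_top.not.2 hb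
  refine eq_zero_of_parallelogram h2 hker (Q := fun x ↦ tripleDet p q r w (G x) x)
    (fun x y ↦ by simp only [tripleDet, map_add, map_sub]; ring) (fun x hx ↦ ?_) x
  have hdet := hplanar x _ hbw G hG p q r
  refine (mul_eq_zero.1 ?_).resolve_left (LinearMap.mem_ker.not.1 hx)
  simp only [tripleDet, LinearMap.add_apply, LinearMap.smul_apply, Module.End.one_apply,
    LinearMap.smulRight_apply, map_add, map_smul, smul_eq_mul] at hdet ⊢
  linear_combination hdet

variable [FiniteDimensional F V]

lemma exists_smul_one_add_smulRight_mem (h2 : (2 : F) ≠ 0) (hV : 2 < Module.finrank F V)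
    (hplanar : ∀ z, IsPlanarAt 𝒢 z) {z : V} {G : Module.End F V} (hG : G ∈ 𝒢)
    (hz : LinearIndependent F ![z, G z])
    (hdim : 1 < Module.finrank F (𝒢 ⊓ eigenAt F z : Submodule F _)) :
    ∃ (c : F) (w : V) (b : Module.Dual F V), w ≠ 0 ∧ b ≠ 0 ∧ c • 1 + b.smulRight w ∈ 𝒢 := by
  obtain ⟨L, ⟨hL𝒢, hLz⟩, hL⟩ := exists_mem_notMem_span_one hdim
  obtain ⟨c, hc⟩ := mem_eigenAt.1 hLz
  obtain ⟨w, b, hw, hb⟩ := exists_eq_smulRight_of_tripleDet_eq_zero h2 hV (K := L - c • 1)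
    (G := G) (fun p q r x ↦ by
      have hdet := hplanar x L hL𝒢 G hG p q r
      simp only [tripleDet, LinearMap.sub_apply, LinearMap.smul_apply, Module.End.one_apply,
        map_sub, map_smul, smul_eq_mul] at hdet ⊢
      linear_combination hdet)
    (by simp [hc]) hz
  refine ⟨c, w, b, hw, fun hb0 ↦ hL ?_, by simpa [← hb] using hL𝒢⟩
  rw [hb0, LinearMap.zero_smulRight, sub_eq_zero] at hb
  exact Submodule.mem_span_singleton.2 ⟨c, hb.symm⟩

lemma exists_forall_mem_eq_smul_one_add_smulRight (h2 : (2 : F) ≠ 0)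
    (hV : 2 < Module.finrank F V) {s : V} (hplanar : ∀ z, IsPlanarAt 𝒢 z)
    (hdim : ∀ z ∉ Submodule.span F {s},
      Module.finrank F V ≤ Module.finrank F (𝒢 ⊓ eigenAt F z : Submodule F _) + 1) :
    ∃ w : V, w ≠ 0 ∧ ∀ G ∈ 𝒢, ∃ (μ : F) (g : Module.Dual F V), G = μ • 1 + g.smulRight w := by
  by_cases hscalar : ∀ G ∈ 𝒢, ∀ z ∉ Submodule.span F {s}, G ∈ eigenAt F z
  · obtain ⟨f, -, w, -, hfs, -, hfw, -⟩ := exists_dual_pair_apply_eq_zero hV s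
    have hspan : Submodule.span F {s} ≠ ⊤ := fun htop ↦ by
      obtain ⟨c, rfl⟩ := Submodule.mem_span_singleton.1 (htop.ge (Submodule.mem_top (x := w)))
      simp [hfs] at hfw
    refine ⟨w, fun hw ↦ by simp [hw] at hfw, fun G hG ↦ ?_⟩
    obtain ⟨c, rfl⟩ := exists_eq_smul_one_of_mem_eigenAt h2 hspan (hscalar G hG)
    exact ⟨c, 0, by simp⟩
  · push Not at hscalar
    obtain ⟨G, hG, z, hzs, hGz⟩ := hscalar
    have hz0 : z ≠ 0 := fun hz0 ↦ hzs (hz0 ▸ Submodule.zero_mem _)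
    have hzG : LinearIndependent F ![z, G z] := (LinearIndependent.pair_iff' hz0).2
      fun c hc ↦ hGz (mem_eigenAt.2 ⟨c, hc⟩)
    have hdimz := hdim z hzs
    obtain ⟨c, w, b, hw, hb, hbw⟩ :=
      exists_smul_one_add_smulRight_mem h2 hV hplanar hG hzG (by lia)
    exact ⟨w, hw, fun L hL ↦ exists_eq_smul_one_add_smulRight_of_tripleDet_eq_zero hV hw
      (tripleDet_eq_zero_of_smul_one_add_smulRight_mem h2 hplanar hb hbw hL)⟩

end PlanarEverywhere

section Transversal

variable {F V : Type*} [Field F] [AddCommGroup V] [Module F V] [FiniteDimensional F V]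

lemma exists_isProdTwoInvolutions_apply_self_trace_eq (h2 : (2 : F) ≠ 0)
    (hV : 2 < Module.finrank F V) {w : V} (hw : w ≠ 0) (c : F) :
    ∃ A : Module.End F V, IsProdTwoInvolutions A ∧ A w = w ∧ LinearMap.trace F V A = c := by
  obtain ⟨f, hf⟩ := Module.Projective.exists_dual_eq_one F hw
  have hker := finrank_ker_add_one hf
  obtain ⟨A, hA, hAc⟩ :=
    exists_isProdTwoInvolutions_trace_eq (V := LinearMap.ker f) (by lia) (c - 1)
  refine ⟨extendKer hf 0 A, hA.extendKer 0 h2 hf, by simp [extendKer_apply, hf], ?_⟩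
  simpa [hf, hAc] using trace_mul_extendKer 0 (A := A) hf 1

lemma exists_isProdTwoInvolutions_apply_eq_smul_trace_eq (h2 : (2 : F) ≠ 0)
    (hV : 2 < Module.finrank F V) {w u : V} (hw : w ≠ 0) (hu : u ≠ 0) (c : F) :
    ∃ (A : Module.End F V) (t : F),
      IsProdTwoInvolutions A ∧ A w = t • u ∧ LinearMap.trace F V A = t * c := by
  by_cases hwu : LinearIndependent F ![w, u]
  · obtain ⟨A, hA, hAw, hAc⟩ := exists_isProdTwoInvolutions_apply_eq_trace_eq hwu c
    exact ⟨A, 1, hA, by rw [hAw, one_smul], by rw [hAc, one_mul]⟩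
  · obtain ⟨d, rfl⟩ : ∃ d : F, d • w = u := by simpa [LinearIndependent.pair_iff' hw] using hwu
    have hd : d ≠ 0 := fun hd ↦ hu (by simp [hd])
    obtain ⟨A, hA, hAw, hAc⟩ := exists_isProdTwoInvolutions_apply_self_trace_eq h2 hV hw (d⁻¹ * c)
    exact ⟨A, d⁻¹, hA, by rw [hAw, inv_smul_smul₀ hd], hAc⟩

variable {𝒢 : Submodule F (Module.End F V)}

lemma exists_forall_smul_one_add_smulRight_mem (hV : 1 < Module.finrank F V)
    (h𝒢 : Module.finrank F 𝒢 ≤ Module.finrank F V) {w : V} (hw : w ≠ 0) :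
    ∃ (a : F) (u : V), (a ≠ 0 ∨ u ≠ 0) ∧ ∀ (μ : F) (g : Module.Dual F V),
      μ • 1 + g.smulRight w ∈ 𝒢 → a * μ + g u = 0 := by
  let Ψ : F × Module.Dual F V →ₗ[F] Module.End F V :=
    (LinearMap.toSpanSingleton F _ 1).coprod (LinearMap.smulRightₗ.flip w)
  have hΨ : ∀ μ g, Ψ (μ, g) = μ • 1 + g.smulRight w := fun μ g ↦ by simp [Ψ]
  have hinj : Function.Injective Ψ := by
    rw [injective_iff_map_eq_zero]
    rintro ⟨μ, g⟩ h0
    rw [hΨ] at h0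
    obtain ⟨x, hx⟩ := exists_linearIndependent_pair_of_one_lt_finrank (R := F) hV hw
    obtain ⟨-, q, -, -, hqw, hqx⟩ := exists_dual_pair hx
    have hμ : μ = 0 := by simpa [hqw, hqx] using congrArg q (LinearMap.congr_fun h0 x)
    have hg : g = 0 := LinearMap.ext fun v ↦ by
      simpa [hμ, hw] using LinearMap.congr_fun h0 v
    rw [hμ, hg, Prod.mk_zero_zero]
  have hlt : 𝒢.comap Ψ < ⊤ := by
    refine lt_top_iff_ne_top.2 fun htop ↦ ?_
    have hrange := Submodule.finrank_mono (LinearMap.range_le_iff_comap.2 htop)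
    rw [LinearMap.finrank_range_of_inj hinj, Module.finrank_prod, Module.finrank_self,
      Subspace.dual_finrank_eq] at hrange
    lia
  obtain ⟨φ, hφ0, hφ⟩ := Submodule.exists_le_ker_of_lt_top _ hlt
  obtain ⟨u, hu⟩ := (Module.evalEquiv F V).surjective (φ ∘ₗ LinearMap.inr F F (Module.Dual F V))
  have hφΨ : ∀ μ g, φ (μ, g) = φ (1, 0) * μ + g u := fun μ g ↦ by
    have hgu : g u = φ (0, g) := LinearMap.congr_fun hu g
    rw [hgu, mul_comm, ← smul_eq_mul, ← map_smul, ← map_add]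
    simp
  refine ⟨φ (1, 0), u, ?_, fun μ g hg ↦ ?_⟩
  · by_contra! h0
    exact hφ0 (LinearMap.ext fun ⟨μ, g⟩ ↦ by rw [hφΨ, h0.1, h0.2]; simp)
  · rw [← hφΨ]
    exact hφ (show Ψ (μ, g) ∈ 𝒢 by rwa [hΨ])

lemma forall_smulRight_mem_of_forall_eq_smul_one_add_smulRight (h2 : (2 : F) ≠ 0)
    (hV : 2 < Module.finrank F V) (h𝒢 : Module.finrank F 𝒢 = Module.finrank F V)
    (h0 : ¬ TraceRealizable 𝒢 0) {w : V} (hw : w ≠ 0)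
    (hall : ∀ G ∈ 𝒢, ∃ (μ : F) (g : Module.Dual F V), G = μ • 1 + g.smulRight w)
    (g : Module.Dual F V) : g.smulRight w ∈ 𝒢 := by
  obtain ⟨a, u, hau, hrel⟩ := exists_forall_smul_one_add_smulRight_mem (by lia) h𝒢.le hw
  have hu : u = 0 := by
    by_contra hu
    obtain ⟨A, t, hA, hAw, hAt⟩ :=
      exists_isProdTwoInvolutions_apply_eq_smul_trace_eq h2 hV hw hu a
    refine h0 ⟨A, hA, fun G hG ↦ ?_⟩
    obtain ⟨μ, g, rfl⟩ := hall G hG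
    rw [LinearMap.trace_mul_comm, mul_zero, map_zero, mul_add, map_add, trace_mul_smulRight, hAw,
      mul_smul_comm, mul_one, map_smul, hAt, map_smul]
    simp only [smul_eq_mul]
    linear_combination t * hrel μ g hG
  have ha : a ≠ 0 := hau.resolve_right (not_not.2 hu)
  let Θ : Module.Dual F V →ₗ[F] Module.End F V := LinearMap.smulRightₗ.flip w
  have hle : 𝒢 ≤ LinearMap.range Θ := by
    intro G hG
    obtain ⟨μ, g, rfl⟩ := hall G hG
    have hμ : μ = 0 := by simpa [hu, ha] using hrel μ g hG
    exact ⟨g, by simp [Θ, hμ]⟩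
  have heq := Submodule.eq_of_le_of_finrank_le hle <|
    ((LinearMap.finrank_range_le Θ).trans_eq Subspace.dual_finrank_eq).trans_eq h𝒢.symm
  rw [heq]
  exact ⟨g, by simp [Θ]⟩

theorem forall_smulRight_mem_or_of_not_traceRealizable (h2 : (2 : F) ≠ 0)
    (hV : 2 < Module.finrank F V) (h𝒢 : Module.finrank F 𝒢 = Module.finrank F V)
    (h0 : ¬ TraceRealizable 𝒢 0) :
    (∃ w : V, w ≠ 0 ∧ ∀ g : Module.Dual F V, g.smulRight w ∈ 𝒢) ∨
      ∃ g : Module.Dual F V, g ≠ 0 ∧ ∀ z : V, g.smulRight z ∈ 𝒢 := by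
  have hplanar : ∀ z ∉ exceptionalVectors 𝒢, IsPlanarAt 𝒢 z := fun z hz ↦
    isPlanarAt_of_notMem_exceptionalVectors h2 h𝒢.le h0 hz
  by_cases hspan : Submodule.span F (exceptionalVectors 𝒢) = ⊤
  · exact .inr <|
      exists_forall_smulRight_mem_of_span_exceptionalVectors_eq_top h2 hV h𝒢 hplanar hspan
  · obtain ⟨s, hs⟩ := exists_exceptionalVectors_subset_span_singleton h2 hplanar hspan
    have hplanar' := isPlanarAt_of_forall_notMem_span_singleton h2 hV (s := s)
      fun z hz ↦ hplanar z fun hz' ↦ hz (hs hz')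
    obtain ⟨w, hw, hall⟩ := exists_forall_mem_eq_smul_one_add_smulRight h2 hV hplanar'
      fun z hz ↦ finrank_le_of_notMem_exceptionalVectors h2 h0
        (fun hz0 ↦ hz (hz0 ▸ Submodule.zero_mem _)) fun hz' ↦ hz (hs hz')
    exact .inl ⟨w, hw,
      forall_smulRight_mem_of_forall_eq_smul_one_add_smulRight h2 hV h𝒢 h0 hw hall⟩

theorem exists_forall_apply_eq_zero_or_of_forall_not_isProdTwoInvolutions (h2 : (2 : F) ≠ 0)
    (hV : 2 < Module.finrank F V) {𝒰 : Submodule F (Module.End F V)}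
    (h𝒰 : Module.finrank F 𝒰 + Module.finrank F V = Module.finrank F (Module.End F V))
    (hinv : ∀ X ∈ 𝒰, ¬ IsProdTwoInvolutions X) :
    (∃ w : V, w ≠ 0 ∧ ∀ X ∈ 𝒰, X w = 0) ∨
      ∃ g : Module.Dual F V, g ≠ 0 ∧ ∀ X ∈ 𝒰, g ∘ₗ X = 0 := by
  set 𝒢 := (endTraceForm F V).orthogonal 𝒰
  have h𝒢 : Module.finrank F 𝒢 = Module.finrank F V := by
    rw [LinearMap.BilinForm.finrank_orthogonal endTraceForm_nondegenerate]
    lia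
  have h0 : ¬ TraceRealizable 𝒢 0 := by
    rintro ⟨A, hA, hA0⟩
    refine hinv A ?_ hA
    rw [← LinearMap.BilinForm.orthogonal_orthogonal endTraceForm_nondegenerate
      endTraceForm_isRefl 𝒰]
    intro G hG
    exact (hA0 G hG).trans (by rw [mul_zero, map_zero])
  have horth : ∀ (g : Module.Dual F V) (z : V), g.smulRight z ∈ 𝒢 → ∀ X ∈ 𝒰, g (X z) = 0 :=
    fun g z hgz X hX ↦ by
      rw [← trace_mul_smulRight]
      exact hgz X hX
  refine (forall_smulRight_mem_or_of_not_traceRealizable h2 hV h𝒢 h0).imp ?_ ?_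
  · rintro ⟨w, hw, hmem⟩
    exact ⟨w, hw, fun X hX ↦ (Module.forall_dual_apply_eq_zero_iff F _).1
      fun g ↦ horth g w (hmem g) X hX⟩
  · rintro ⟨g, hg, hmem⟩
    exact ⟨g, hg, fun X hX ↦ LinearMap.ext fun z ↦ horth g z (hmem z) X hX⟩

end Transversal

section Matrix

variable {F ι : Type*} [Field F] [Fintype ι] {𝒰 : Submodule F (Matrix ι ι F)}

/-- The matrices in `𝒰` share a nonzero vector in their right kernels. -/
def HasCommonKernelVec (𝒰 : Submodule F (Matrix ι ι F)) : Prop :=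
  ∃ z : ι → F, z ≠ 0 ∧ ∀ X ∈ 𝒰, X *ᵥ z = 0

/-- The matrices in `𝒰` share a nonzero vector in their left kernels. -/
def HasCommonCokernelVec (𝒰 : Submodule F (Matrix ι ι F)) : Prop :=
  ∃ z : ι → F, z ≠ 0 ∧ ∀ X ∈ 𝒰, z ᵥ* X = 0

/-- The subspace of matrices `X` such that `T X` kills the vector `x`. The type of the subspaces
`vanishingAt T x` (common kernel vector or common cokernel vector) is what tells apart the maps
`X ↦ P * X * Q` and `X ↦ P * Xᵀ * Q`. -/
def vanishingAt (T : Matrix ι ι F ≃ₗ[F] Matrix ι ι F) (x : ι → F) : Submodule F (Matrix ι ι F) :=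
  LinearMap.ker ((mulVecBilin F F).flip x ∘ₗ T.toLinearMap)

variable {T : Matrix ι ι F ≃ₗ[F] Matrix ι ι F} {x : ι → F}

lemma mem_vanishingAt {X : Matrix ι ι F} : X ∈ vanishingAt T x ↔ T X *ᵥ x = 0 := Iff.rfl

lemma exists_dotProduct_eq_one (hx : x ≠ 0) : ∃ f : ι → F, f ⬝ᵥ x = 1 := by
  classical
  obtain ⟨i, hi⟩ := Function.ne_iff.1 hx
  exact ⟨Pi.single i (x i)⁻¹, by simpa using inv_mul_cancel₀ hi⟩

lemma finrank_vanishingAt (hx : x ≠ 0) :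
    Module.finrank F (vanishingAt T x) + Fintype.card ι = Fintype.card ι * Fintype.card ι := by
  have hsurj : Function.Surjective ((mulVecBilin F F).flip x ∘ₗ T.toLinearMap) := by
    obtain ⟨f, hf⟩ := exists_dotProduct_eq_one hx
    refine fun v ↦ ⟨T.symm (vecMulVec v f), ?_⟩
    simp [vecMulVec_mulVec, hf]
  have h := LinearMap.finrank_range_add_finrank_ker ((mulVecBilin F F).flip x ∘ₗ T.toLinearMap)
  rw [LinearMap.range_eq_top.2 hsurj, finrank_top, Module.finrank_fintype_fun_eq_card,
    Module.finrank_matrix, Module.finrank_self, mul_one] at h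
  rwa [add_comm]

variable [DecidableEq ι]

lemma not_isProdTwoInvolutions_of_mem_vanishingAt
    (hT : ∀ A, IsProdTwoInvolutions A → IsProdTwoInvolutions (T A)) (hx : x ≠ 0)
    {X : Matrix ι ι F} (hX : X ∈ vanishingAt T x) : ¬ IsProdTwoInvolutions X := fun h ↦
  hx <| mulVec_injective_of_isUnit (hT X h).isUnit <| by rw [mem_vanishingAt.1 hX, mulVec_zero]

lemma hasCommonKernelVec_or_hasCommonCokernelVec_of_two_lt_card (h2 : (2 : F) ≠ 0)
    (hι : 2 < Fintype.card ι)
    (h𝒰 : Module.finrank F 𝒰 + Fintype.card ι = Fintype.card ι * Fintype.card ι)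
    (hinv : ∀ X ∈ 𝒰, ¬ IsProdTwoInvolutions X) :
    HasCommonKernelVec 𝒰 ∨ HasCommonCokernelVec 𝒰 := by
  let e := toLinAlgEquiv' (R := F) (n := ι)
  have hmem : ∀ X, X ∈ 𝒰.map e.toLinearMap ↔ e.symm X ∈ 𝒰 := fun X ↦
    ⟨by rintro ⟨Y, hY, rfl⟩; simpa using hY, fun h ↦ ⟨_, h, by simp⟩⟩
  have hfinrank : Module.finrank F (𝒰.map e.toLinearMap) + Module.finrank F (ι → F) =
      Module.finrank F (Module.End F (ι → F)) := by
    rw [Module.finrank_linearMap, Module.finrank_fintype_fun_eq_card, ← h𝒰,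
      ← LinearEquiv.finrank_map_eq e.toLinearEquiv 𝒰]
  refine (exists_forall_apply_eq_zero_or_of_forall_not_isProdTwoInvolutions h2
    (by rwa [Module.finrank_fintype_fun_eq_card]) hfinrank
    fun X hX h ↦ hinv _ ((hmem X).1 hX) (h.map e.symm)).imp ?_ ?_
  · rintro ⟨z, hz, hzX⟩
    exact ⟨z, hz, fun X hX ↦ hzX (e X) ⟨X, hX, rfl⟩⟩
  · rintro ⟨g, hg, hgX⟩
    obtain ⟨z, rfl⟩ := (dotProductEquiv F ι).surjective g
    refine ⟨z, (LinearEquiv.map_ne_zero_iff _).1 hg, fun X hX ↦ ?_⟩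
    refine dotProduct_eq_zero _ fun v ↦ ?_
    rw [← dotProduct_mulVec]
    exact LinearMap.congr_fun (hgX (e X) ⟨X, hX, rfl⟩) v

end Matrix

section FinTwo

variable {F : Type*} [Field F] {A B X Y Z : Matrix (Fin 2) (Fin 2) F}

/-- The polar form of the determinant of `2 × 2` matrices. -/
def detPolar (A B : Matrix (Fin 2) (Fin 2) F) : F :=
  A 0 0 * B 1 1 + A 1 1 * B 0 0 - A 0 1 * B 1 0 - A 1 0 * B 0 1

lemma det_add_smul_fin_two (t : F) :
    (A + t • B).det = A.det + detPolar A B * t + B.det * t ^ 2 := by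
  simp only [detPolar, det_fin_two, Matrix.add_apply, Matrix.smul_apply, smul_eq_mul]
  ring

lemma det_add_fin_two : (A + B).det = A.det + detPolar A B + B.det := by
  simpa using det_add_smul_fin_two (A := A) (B := B) 1

lemma exists_eq_vecMulVec_of_det_eq_zero (hA : A.det = 0) :
    ∃ u v : Fin 2 → F, A = vecMulVec u v := by
  rw [det_fin_two] at hA
  by_cases h00 : A 0 0 = 0
  · by_cases h01 : A 0 1 = 0
    · refine ⟨![0, 1], A 1, ?_⟩
      ext i j
      fin_cases i <;> fin_cases j <;> simp [vecMulVec_apply, h00, h01]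
    · refine ⟨![1, A 1 1 / A 0 1], A 0, ?_⟩
      ext i j
      fin_cases i <;> fin_cases j <;> simp [vecMulVec_apply, field]
      linear_combination -hA
  · refine ⟨![1, A 1 0 / A 0 0], A 0, ?_⟩
    ext i j
    fin_cases i <;> fin_cases j <;> simp [vecMulVec_apply, field]
    linear_combination hA

lemma mulVec_eq_zero_or_vecMul_eq_zero_of_detPolar_eq_zero {u v : Fin 2 → F} (hY : Y.det = 0)
    (hpolar : detPolar (vecMulVec u v) Y = 0) :
    Y *ᵥ ![-v 1, v 0] = 0 ∨ ![-u 1, u 0] ᵥ* Y = 0 := by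
  obtain ⟨p, q, rfl⟩ := exists_eq_vecMulVec_of_det_eq_zero hY
  rw [vecMulVec_mulVec, vecMul_vecMulVec]
  have hprod : (q ⬝ᵥ ![-v 1, v 0]) * (![-u 1, u 0] ⬝ᵥ p) = 0 := by
    simp only [detPolar, vecMulVec_apply] at hpolar
    simp only [dotProduct, Fin.sum_univ_two, cons_val_zero, cons_val_one]
    linear_combination hpolar
  refine (mul_eq_zero.1 hprod).imp (fun h ↦ ?_) fun h ↦ ?_ <;> simp [h]

lemma rotate_ne_zero {v : Fin 2 → F} (hv : v ≠ 0) : ![-v 1, v 0] ≠ 0 := by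
  intro h
  have h0 := congrFun h 0
  have h1 := congrFun h 1
  simp only [cons_val_zero, cons_val_one, Pi.zero_apply, neg_eq_zero] at h0 h1
  exact hv <| funext fun i ↦ by fin_cases i <;> simp [h0, h1]

theorem hasCommonKernelVec_or_hasCommonCokernelVec_of_det_eq_zero
    {𝒰 : Submodule F (Matrix (Fin 2) (Fin 2) F)} (h𝒰 : ∀ X ∈ 𝒰, X.det = 0) :
    HasCommonKernelVec 𝒰 ∨ HasCommonCokernelVec 𝒰 := by
  by_cases hbot : 𝒰 = ⊥
  · refine .inl ⟨1, one_ne_zero, fun X hX ↦ ?_⟩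
    rw [(Submodule.eq_bot_iff _).1 hbot X hX, zero_mulVec]
  obtain ⟨X, hX, hX0⟩ := Submodule.exists_mem_ne_zero_of_ne_bot hbot
  obtain ⟨u, v, rfl⟩ := exists_eq_vecMulVec_of_det_eq_zero (h𝒰 X hX)
  have hu : u ≠ 0 := by rintro rfl; exact hX0 (zero_vecMulVec v)
  have hv : v ≠ 0 := by rintro rfl; exact hX0 (vecMulVec_zero u)
  have heach : ∀ Y ∈ 𝒰, Y ∈ LinearMap.ker ((mulVecBilin F F).flip ![-v 1, v 0]) ∨
      Y ∈ LinearMap.ker (vecMulBilin F F ![-u 1, u 0]) := fun Y hY ↦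
    mulVec_eq_zero_or_vecMul_eq_zero_of_detPolar_eq_zero (h𝒰 Y hY) <| by
      have h := h𝒰 _ (𝒰.add_mem hX hY)
      rwa [det_add_fin_two, h𝒰 _ hX, h𝒰 Y hY, zero_add, add_zero] at h
  exact (AddSubgroupClass.subset_union.1 heach).imp (fun h ↦ ⟨_, rotate_ne_zero hv, h⟩)
    fun h ↦ ⟨_, rotate_ne_zero hu, h⟩

lemma mul_self_eq_one_of_det_of_trace (hdet : A.det = -1) (htr : A.trace = 0) : A * A = 1 := by
  have h11 : A 1 1 = -A 0 0 := by linear_combination (trace_fin_two A).symm.trans htr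
  rw [det_fin_two, h11] at hdet
  ext i j
  fin_cases i <;> fin_cases j <;> simp [mul_apply, h11]
  · linear_combination -hdet
  · ring
  · ring
  · linear_combination -hdet

lemma isProdTwoInvolutions_of_det_of_trace (hdet : A.det = -1) (htr : A.trace = 0) :
    IsProdTwoInvolutions A :=
  ⟨1, A, one_mul 1, mul_self_eq_one_of_det_of_trace hdet htr, (one_mul A).symm⟩

lemma isProdTwoInvolutions_of_det_eq_one (hA : A.det = 1) : IsProdTwoInvolutions A := by
  suffices ∃ J : Matrix (Fin 2) (Fin 2) F, J.det = -1 ∧ J.trace = 0 ∧ (J * A).trace = 0 by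
    obtain ⟨J, hdet, htr, hJA⟩ := this
    exact IsProdTwoInvolutions.iff_exists_involution.2
      ⟨J, mul_self_eq_one_of_det_of_trace hdet htr,
        mul_self_eq_one_of_det_of_trace (by rw [det_mul, hdet, hA, mul_one]) hJA⟩
  have htrace : ∀ p q r t : F, (!![p, q; r, t] * A).trace =
      p * A 0 0 + q * A 1 0 + (r * A 0 1 + t * A 1 1) := fun p q r t ↦ by
    rw [trace_fin_two, mul_apply, mul_apply]
    simp
  by_cases h10 : A 1 0 = 0
  · by_cases h01 : A 0 1 = 0
    · exact ⟨!![0, 1; 1, 0], by simp, by simp [trace_fin_two], by rw [htrace]; simp [h01, h10]⟩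
    · exact ⟨!![1, 0; (A 1 1 - A 0 0) / A 0 1, -1], by simp, by simp [trace_fin_two],
        by rw [htrace, div_mul_cancel₀ _ h01]; ring⟩
  · exact ⟨!![1, (A 1 1 - A 0 0) / A 1 0; 0, -1], by simp, by simp [trace_fin_two],
      by rw [htrace, div_mul_cancel₀ _ h10]; ring⟩

lemma IsProdTwoInvolutions.det_sq_eq_one {ι : Type*} [Fintype ι] [DecidableEq ι]
    {M : Matrix ι ι F} (hM : IsProdTwoInvolutions M) : M.det ^ 2 = 1 := by
  obtain ⟨s, t, hs, ht, hst⟩ := hM.map detMonoidHom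
  calc M.det ^ 2 = (s * t) ^ 2 := by rw [← hst, coe_detMonoidHom]
    _ = (s * s) * (t * t) := by ring
    _ = 1 := by rw [hs, ht, one_mul]

lemma exists_det_eq_one_detPolar_eq_zero (N : Matrix (Fin 2) (Fin 2) F) :
    ∃ A : Matrix (Fin 2) (Fin 2) F, A.det = 1 ∧ detPolar A N = 0 := by
  by_cases h10 : N 1 0 = 0
  · by_cases h01 : N 0 1 = 0
    · exact ⟨!![0, 1; -1, 0], by simp, by simp [detPolar, h01, h10]⟩
    · exact ⟨!![1, 0; (N 0 0 + N 1 1) / N 0 1, 1], by simp, by simp [detPolar, field]; ring⟩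
  · exact ⟨!![1, (N 0 0 + N 1 1) / N 1 0; 0, 1], by simp, by simp [detPolar, field]; ring⟩

lemma eq_zero_of_forall_quadratic_sq_eq_one (h2 : (2 : F) ≠ 0) {a : F} (ha : a ≠ 0)
    (ha1 : a ^ 2 ≠ 1) {p q r : F} (h : ∀ t : F, (p + q * t + r * t ^ 2) ^ 2 = 1) : r = 0 := by
  have hp : p ≠ 0 := by
    rintro rfl
    simpa using h 0
  have hodd : ∀ t : F, t ≠ 0 → q * (p + r * t ^ 2) = 0 := fun t ht ↦ by
    apply mul_left_cancel₀ (mul_ne_zero (mul_ne_zero h2 h2) ht)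
    linear_combination h t - h (-t)
  have ha1' : 1 - a ^ 2 ≠ 0 := fun h0 ↦ ha1 (sub_eq_zero.1 h0).symm
  have hq : q = 0 := by
    by_contra hq
    have h1 := (mul_eq_zero.1 (hodd 1 one_ne_zero)).resolve_left hq
    have ha := (mul_eq_zero.1 (hodd a ha)).resolve_left hq
    have hr : r * (1 - a ^ 2) = 0 := by linear_combination h1 - ha
    simp [(mul_eq_zero.1 hr).resolve_right ha1', hp] at h1
  by_contra hr
  have heven : ∀ t : F, t ≠ 0 → 2 * p + r * t ^ 2 = 0 := fun t ht ↦ by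
    apply mul_left_cancel₀ (mul_ne_zero hr (pow_ne_zero 2 ht))
    have ht := h t
    have h0 := h 0
    rw [hq] at ht h0
    linear_combination ht - h0
  exact mul_ne_zero hr ha1' (by linear_combination heven 1 one_ne_zero - heven a ha)

lemma det_map_eq_zero_of_sq_ne_one (h2 : (2 : F) ≠ 0) {a : F} (ha : a ≠ 0) (ha1 : a ^ 2 ≠ 1)
    {T : Matrix (Fin 2) (Fin 2) F →ₗ[F] Matrix (Fin 2) (Fin 2) F}
    (hT : ∀ A, IsProdTwoInvolutions A → IsProdTwoInvolutions (T A))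
    {N : Matrix (Fin 2) (Fin 2) F} (hN : N.det = 0) : (T N).det = 0 := by
  obtain ⟨A, hA, hAN⟩ := exists_det_eq_one_detPolar_eq_zero N
  refine eq_zero_of_forall_quadratic_sq_eq_one h2 ha ha1 (p := (T A).det)
    (q := detPolar (T A) (T N)) fun t ↦ ?_
  have hdet : (A + t • N).det = 1 := by rw [det_add_smul_fin_two, hA, hAN, hN]; ring
  rw [← det_add_smul_fin_two, ← map_smul, ← map_add]
  exact (hT _ (isProdTwoInvolutions_of_det_eq_one hdet)).det_sq_eq_one

-- `det ∘ T` is a quadratic form vanishing on singular matrices, so it is alternating in the rows.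
lemma det_map_eq_det_map_one_mul_det
    {T : Matrix (Fin 2) (Fin 2) F →ₗ[F] Matrix (Fin 2) (Fin 2) F}
    (hT : ∀ N, N.det = 0 → (T N).det = 0) (X : Matrix (Fin 2) (Fin 2) F) :
    (T X).det = (T 1).det * X.det := by
  have hsplit : ∀ a b c d : F, (T !![a, b; c, d]).det =
      detPolar (T !![a, b; 0, 0]) (T !![0, 0; c, d]) := fun a b c d ↦ by
    have hadd : !![a, b; c, d] = !![a, b; 0, 0] + !![0, 0; c, d] := by simp
    rw [hadd, map_add, det_add_fin_two, hT !![a, b; 0, 0] (by simp), hT !![0, 0; c, d] (by simp),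
      zero_add, add_zero]
  have hrow₀ : ∀ a b : F, T !![a, b; 0, 0] = a • T !![1, 0; 0, 0] + b • T !![0, 1; 0, 0] :=
    fun a b ↦ by simp [← map_smul, ← map_add]
  have hrow₁ : ∀ a b : F, T !![0, 0; a, b] = a • T !![0, 0; 1, 0] + b • T !![0, 0; 0, 1] :=
    fun a b ↦ by simp [← map_smul, ← map_add]
  have hvanish : ∀ a b : F, detPolar (T !![a, b; 0, 0]) (T !![0, 0; a, b]) = 0 := fun a b ↦ by
    rw [← hsplit, hT _ (by simp [mul_comm])]
  have h₁₀ := hvanish 1 0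
  have h₀₁ := hvanish 0 1
  have h₁₁ := hvanish 1 1
  rw [hrow₀ 1 1, hrow₁ 1 1] at h₁₁
  rw [eta_fin_two X, one_fin_two, hsplit, hsplit, hrow₀ (X 0 0), hrow₁ (X 1 0), det_fin_two_of]
  simp only [detPolar, Matrix.add_apply, Matrix.smul_apply, smul_eq_mul] at h₁₀ h₀₁ h₁₁ ⊢
  linear_combination (X 0 0 * X 1 0 - X 0 1 * X 1 0) * h₁₀ +
    (X 0 1 * X 1 1 - X 0 1 * X 1 0) * h₀₁ + X 0 1 * X 1 0 * h₁₁

lemma det_eq_zero_of_det_map_eq_zero_of_sq_ne_one (h2 : (2 : F) ≠ 0) {a : F} (ha : a ≠ 0)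
    (ha1 : a ^ 2 ≠ 1) {T : Matrix (Fin 2) (Fin 2) F →ₗ[F] Matrix (Fin 2) (Fin 2) F}
    (hT : ∀ A, IsProdTwoInvolutions A → IsProdTwoInvolutions (T A)) (hX : (T X).det = 0) :
    X.det = 0 := by
  have h1 := (hT 1 ⟨1, 1, one_mul 1, one_mul 1, (one_mul 1).symm⟩).det_sq_eq_one
  rw [det_map_eq_det_map_one_mul_det fun N ↦ det_map_eq_zero_of_sq_ne_one h2 ha ha1 hT] at hX
  exact (mul_eq_zero.1 hX).resolve_left fun h ↦ by simp [h] at h1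

lemma exists_mul_self_sub_trace_mul_add_det_eq_zero (hZ0 : Z ≠ 0) (hdet : Z.det = 0)
    (htr : Z.trace = 0) (hpolar : detPolar X Z = 0) :
    ∃ c : F, c * c - X.trace * c + X.det = 0 := by
  have hZ11 : Z 1 1 = -Z 0 0 := by linear_combination (trace_fin_two Z).symm.trans htr
  rw [det_fin_two, hZ11] at hdet
  rw [detPolar, hZ11] at hpolar
  rw [trace_fin_two, det_fin_two]
  by_cases h01 : Z 0 1 = 0
  · have h00 : Z 0 0 = 0 := by simpa [h01] using hdet
    have h10 : Z 1 0 ≠ 0 := fun h10 ↦ hZ0 <| by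
      ext i j
      fin_cases i <;> fin_cases j <;> simp [h00, h01, h10, hZ11]
    have hX01 : X 0 1 = 0 := by simpa [h00, h01, h10] using hpolar
    exact ⟨X 0 0, by rw [hX01]; ring⟩
  · refine ⟨X 0 0 - X 0 1 * (Z 0 0 / Z 0 1), ?_⟩
    field_simp
    linear_combination Z 0 1 * X 0 1 * hpolar - X 0 1 ^ 2 * hdet

lemma det_eq_zero_of_forall_eq_zero_or_one_or_neg_one
    (hF : ∀ a : F, a = 0 ∨ a = 1 ∨ a = -1) {𝒰 : Submodule F (Matrix (Fin 2) (Fin 2) F)}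
    (h𝒰 : 1 < Module.finrank F 𝒰) (hinv : ∀ X ∈ 𝒰, ¬ IsProdTwoInvolutions X) (hX : X ∈ 𝒰) :
    X.det = 0 := by
  have hne1 : ∀ Y ∈ 𝒰, Y.det ≠ 1 := fun Y hY h ↦ hinv Y hY (isProdTwoInvolutions_of_det_eq_one h)
  obtain ⟨Z, hZ, hZ0, htr⟩ : ∃ Z ∈ 𝒰, Z ≠ 0 ∧ Z.trace = 0 := by
    obtain ⟨⟨Z, hZ⟩, htr, hZ0⟩ := Submodule.exists_mem_ne_zero_of_ne_bot <|
      LinearMap.ker_ne_bot_of_finrank_lt (f := (traceLinearMap (Fin 2) F F).domRestrict 𝒰)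
        (by rwa [Module.finrank_self])
    exact ⟨Z, hZ, fun h ↦ hZ0 (Subtype.ext h), htr⟩
  have hdet : Z.det = 0 := (hF Z.det).resolve_right <| by
    rintro (h | h)
    · exact hne1 Z hZ h
    · exact hinv Z hZ (isProdTwoInvolutions_of_det_of_trace h htr)
  refine (hF X.det).resolve_right ?_
  rintro (h | h)
  · exact hne1 X hX h
  have hpolar : detPolar X Z = 0 := by
    by_contra hp
    refine hne1 _ (𝒰.add_mem hX (𝒰.smul_mem (2 / detPolar X Z) hZ)) ?_
    rw [det_add_smul_fin_two, h, hdet, mul_div_cancel₀ _ hp]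
    ring
  obtain ⟨c, hc⟩ := exists_mul_self_sub_trace_mul_add_det_eq_zero hZ0 hdet htr hpolar
  refine hinv X hX (isProdTwoInvolutions_of_det_of_trace h ?_)
  rw [h] at hc
  rcases hF c with rfl | rfl | rfl
  · simp at hc
  · linear_combination -hc
  · linear_combination hc

theorem hasCommonKernelVec_or_hasCommonCokernelVec_vanishingAt_fin_two (h2 : (2 : F) ≠ 0)
    {T : Matrix (Fin 2) (Fin 2) F ≃ₗ[F] Matrix (Fin 2) (Fin 2) F}
    (hT : ∀ A, IsProdTwoInvolutions A → IsProdTwoInvolutions (T A)) {x : Fin 2 → F} (hx : x ≠ 0) :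
    HasCommonKernelVec (vanishingAt T x) ∨ HasCommonCokernelVec (vanishingAt T x) := by
  refine hasCommonKernelVec_or_hasCommonCokernelVec_of_det_eq_zero fun X hX ↦ ?_
  by_cases hF : ∀ a : F, a = 0 ∨ a = 1 ∨ a = -1
  · have hfinrank := finrank_vanishingAt (T := T) hx
    rw [Fintype.card_fin] at hfinrank
    exact det_eq_zero_of_forall_eq_zero_or_one_or_neg_one hF (by lia)
      (fun X ↦ not_isProdTwoInvolutions_of_mem_vanishingAt hT hx) hX
  · push Not at hF
    obtain ⟨a, ha, ha1, hna1⟩ := hF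
    exact det_eq_zero_of_det_map_eq_zero_of_sq_ne_one (T := T.toLinearMap) h2 ha
      (fun h ↦ (sq_eq_one_iff.1 h).elim ha1 hna1) hT
      (exists_mulVec_eq_zero_iff.1 ⟨x, hx, mem_vanishingAt.1 hX⟩)

end FinTwo

theorem hasCommonKernelVec_or_hasCommonCokernelVec_vanishingAt {F : Type*} [Field F]
    (h2 : (2 : F) ≠ 0) {n : ℕ} (hn : 2 ≤ n)
    {T : Matrix (Fin n) (Fin n) F ≃ₗ[F] Matrix (Fin n) (Fin n) F}
    (hT : ∀ A, IsProdTwoInvolutions A → IsProdTwoInvolutions (T A)) {x : Fin n → F} (hx : x ≠ 0) :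
    HasCommonKernelVec (vanishingAt T x) ∨ HasCommonCokernelVec (vanishingAt T x) := by
  obtain rfl | hn := hn.eq_or_lt
  · exact hasCommonKernelVec_or_hasCommonCokernelVec_vanishingAt_fin_two h2 hT hx
  · exact hasCommonKernelVec_or_hasCommonCokernelVec_of_two_lt_card h2
      (by rwa [Fintype.card_fin]) (finrank_vanishingAt hx)
      fun X ↦ not_isProdTwoInvolutions_of_mem_vanishingAt hT hx

section Rigidity

variable {F ι : Type*} [Field F] [Fintype ι] {T : Matrix ι ι F ≃ₗ[F] Matrix ι ι F} {x y : ι → F}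

lemma exists_dotProduct_pair (hxy : LinearIndependent F ![x, y]) :
    ∃ f g : ι → F, f ⬝ᵥ x = 1 ∧ f ⬝ᵥ y = 0 ∧ g ⬝ᵥ x = 0 ∧ g ⬝ᵥ y = 1 := by
  classical
  obtain ⟨f, g, h⟩ := exists_dual_pair hxy
  obtain ⟨f, rfl⟩ := (dotProductEquiv F ι).surjective f
  obtain ⟨g, rfl⟩ := (dotProductEquiv F ι).surjective g
  exact ⟨f, g, h⟩

lemma HasCommonKernelVec.not_hasCommonCokernelVec (hxy : LinearIndependent F ![x, y])
    (hx : HasCommonKernelVec (vanishingAt T x)) : ¬ HasCommonCokernelVec (vanishingAt T y) := by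
  rintro ⟨g, hg, hgX⟩
  obtain ⟨z, hz, hzX⟩ := hx
  obtain ⟨f, -, hfx, hfy, -⟩ := exists_dotProduct_pair hxy
  obtain ⟨d, hd⟩ := exists_dotProduct_eq_one hz
  refine hg (dotProduct_eq_zero g fun v ↦ ?_)
  set X := vecMulVec v d
  set X' := T.symm (vecMulVec (T X *ᵥ x) f)
  have hX'g : g ᵥ* X' = 0 := hgX X' <| mem_vanishingAt.2 <| by simp [X', vecMulVec_mulVec, hfy]
  have hXX' : (X - X') *ᵥ z = 0 := hzX _ <| mem_vanishingAt.2 <| by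
    simp [X', sub_mulVec, vecMulVec_mulVec, hfx]
  calc g ⬝ᵥ v = g ⬝ᵥ X *ᵥ z := by simp [X, vecMulVec_mulVec, hd]
    _ = g ⬝ᵥ X' *ᵥ z := by rw [sub_mulVec, sub_eq_zero] at hXX'; rw [hXX']
    _ = 0 := by rw [dotProduct_mulVec, hX'g, zero_dotProduct]

lemma forall_hasCommonKernelVec_or_forall_hasCommonCokernelVec
    (hT : ∀ x ≠ 0, HasCommonKernelVec (vanishingAt T x) ∨ HasCommonCokernelVec (vanishingAt T x)) :
    (∀ x ≠ 0, HasCommonKernelVec (vanishingAt T x)) ∨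
      ∀ x ≠ 0, HasCommonCokernelVec (vanishingAt T x) := by
  by_contra! ⟨⟨y, hy0, hy⟩, x, hx0, hx⟩
  have hker := (hT x hx0).resolve_right hx
  by_cases hxy : LinearIndependent F ![x, y]
  · exact hker.not_hasCommonCokernelVec hxy ((hT y hy0).resolve_left hy)
  · obtain ⟨c, rfl⟩ : ∃ c : F, c • x = y := by simpa [LinearIndependent.pair_iff' hx0] using hxy
    obtain ⟨z, hz, hzX⟩ := hker
    refine hy ⟨z, hz, fun X hX ↦ hzX X ?_⟩
    rw [mem_vanishingAt, mulVec_smul] at hX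
    exact (smul_eq_zero.1 hX).resolve_left (left_ne_zero_of_smul hy0)

lemma HasCommonKernelVec.exists_mulVec_eq (hx : x ≠ 0)
    (h : HasCommonKernelVec (vanishingAt T x)) :
    ∃ (z : ι → F) (R : (ι → F) →ₗ[F] ι → F), z ≠ 0 ∧ Function.Injective R ∧
      ∀ X, X *ᵥ z = R (T X *ᵥ x) := by
  obtain ⟨z, hz, hzX⟩ := h
  obtain ⟨f, hf⟩ := exists_dotProduct_eq_one hx
  obtain ⟨d, hd⟩ := exists_dotProduct_eq_one hz
  let R : (ι → F) →ₗ[F] ι → F :=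
    (mulVecBilin F F).flip z ∘ₗ T.symm.toLinearMap ∘ₗ (vecMulVecBilin F F).flip f
  have hR : ∀ X, X *ᵥ z = R (T X *ᵥ x) := fun X ↦ by
    rw [← sub_eq_zero]
    change X *ᵥ z - T.symm (vecMulVec (T X *ᵥ x) f) *ᵥ z = 0
    rw [← sub_mulVec]
    exact hzX _ <| mem_vanishingAt.2 <| by simp [sub_mulVec, vecMulVec_mulVec, hf]
  refine ⟨z, R, hz, LinearMap.injective_iff_surjective.2 fun v ↦ ?_, hR⟩
  exact ⟨T (vecMulVec v d) *ᵥ x, by rw [← hR, vecMulVec_mulVec, hd]; simp⟩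

lemma exists_mulVec_eq_of_add {zx zy zs : ι → F} {Rx Ry Rs : (ι → F) →ₗ[F] ι → F}
    (hxy : LinearIndependent F ![x, y]) (hzs : zs ≠ 0) (hRx : Function.Injective Rx)
    (hRy : Function.Injective Ry) (hx : ∀ X, X *ᵥ zx = Rx (T X *ᵥ x))
    (hy : ∀ X, X *ᵥ zy = Ry (T X *ᵥ y)) (hs : ∀ X, X *ᵥ zs = Rs (T X *ᵥ (x + y))) :
    ∃ z, ∀ X, X *ᵥ z = Rx (T X *ᵥ y) := by
  classical
  obtain ⟨α, β, hαβ⟩ : ∃ α β : F, α • zx + β • zy = zs := by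
    rw [← Submodule.mem_span_pair]
    by_contra hn
    obtain ⟨f, hf, hfle⟩ := Submodule.exists_le_ker_of_notMem hn
    obtain ⟨f, rfl⟩ := (dotProductEquiv F ι).surjective f
    have hfx : f ⬝ᵥ zx = 0 := hfle (Submodule.subset_span (by simp))
    have hfy : f ⬝ᵥ zy = 0 := hfle (Submodule.subset_span (by simp))
    have hTx : T (vecMulVec zs f) *ᵥ x = 0 := hRx <| by simp [← hx, vecMulVec_mulVec, hfx]
    have hTy : T (vecMulVec zs f) *ᵥ y = 0 := hRy <| by simp [← hy, vecMulVec_mulVec, hfy]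
    have hzs0 := hs (vecMulVec zs f)
    rw [mulVec_add, hTx, hTy, add_zero, map_zero, vecMulVec_mulVec] at hzs0
    exact smul_ne_zero hf hzs (by simpa using hzs0)
  obtain ⟨f, g, hfx, hfy, hgx, hgy⟩ := exists_dotProduct_pair hxy
  have hsum : ∀ Y : Matrix ι ι F,
      α • Rx (Y *ᵥ x) + β • Ry (Y *ᵥ y) = Rs (Y *ᵥ x + Y *ᵥ y) := fun Y ↦ by
    obtain ⟨X, rfl⟩ := T.surjective Y
    rw [← hx, ← hy, ← mulVec_add, ← hs, ← hαβ, mulVec_add, mulVec_smul, mulVec_smul]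
  have hα : ∀ v, α • Rx v = Rs v := fun v ↦ by
    simpa [vecMulVec_mulVec, hfx, hfy] using hsum (vecMulVec v f)
  have hβ : ∀ v, β • Ry v = Rs v := fun v ↦ by
    simpa [vecMulVec_mulVec, hgx, hgy] using hsum (vecMulVec v g)
  have hα0 : α ≠ 0 := by
    rintro rfl
    obtain ⟨d, hd⟩ := exists_dotProduct_eq_one hzs
    have h := hs (vecMulVec zs d)
    rw [vecMulVec_mulVec, hd, ← hα, zero_smul] at h
    exact hzs (by simpa using h)
  refine ⟨(α⁻¹ * β) • zy, fun X ↦ ?_⟩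
  rw [mulVec_smul, hy, mul_smul, hβ, ← hα, inv_smul_smul₀ hα0]

lemma exists_forall_exists_mulVec_eq [Nonempty ι]
    (h : ∀ x ≠ 0, HasCommonKernelVec (vanishingAt T x)) :
    ∃ R : (ι → F) →ₗ[F] ι → F, Function.Injective R ∧
      ∀ x, ∃ z, ∀ X, X *ᵥ z = R (T X *ᵥ x) := by
  obtain ⟨x₀, hx₀⟩ := exists_ne (0 : ι → F)
  obtain ⟨z₀, R₀, -, hR₀, hx₀z₀⟩ := (h x₀ hx₀).exists_mulVec_eq hx₀
  refine ⟨R₀, hR₀, fun x ↦ ?_⟩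
  by_cases hli : LinearIndependent F ![x₀, x]
  · have hx : x ≠ 0 := hli.ne_zero 1
    have hsum : x₀ + x ≠ 0 := fun h0 ↦ by
      simpa using (LinearIndependent.pair_iff.1 hli 1 1 (by simpa using h0)).1
    obtain ⟨z, R, -, hR, hxz⟩ := (h x hx).exists_mulVec_eq hx
    obtain ⟨zs, Rs, hzs, -, hxs⟩ := (h _ hsum).exists_mulVec_eq hsum
    exact exists_mulVec_eq_of_add hli hzs hR₀ hR hx₀z₀ hxz hxs
  · obtain ⟨c, rfl⟩ : ∃ c : F, c • x₀ = x := by simpa [LinearIndependent.pair_iff' hx₀] using hli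
    exact ⟨c • z₀, fun X ↦ by rw [mulVec_smul, mulVec_smul, map_smul, hx₀z₀]⟩

theorem exists_forall_eq_mul_mul [Nonempty ι]
    (h : ∀ x ≠ 0, HasCommonKernelVec (vanishingAt T x)) :
    ∃ P Q : Matrix ι ι F, ∀ X, T X = P * X * Q := by
  classical
  obtain ⟨R, hR, hRz⟩ := exists_forall_exists_mulVec_eq h
  choose z hz using fun i ↦ hRz (Pi.single i 1)
  have hdet : IsUnit (LinearMap.toMatrix' R).det := by
    rw [LinearMap.det_toMatrix']
    exact (LinearMap.isUnit_iff_isUnit_det R).1 <|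
      (LinearMap.isUnit_iff_ker_eq_bot R).2 (LinearMap.ker_eq_bot.2 hR)
  refine ⟨(LinearMap.toMatrix' R)⁻¹, (of z)ᵀ, fun X ↦ ?_⟩
  have hcol : X * (of z)ᵀ = LinearMap.toMatrix' R * T X := ext_of_mulVec_single fun i ↦ by
    rw [← mulVec_mulVec, ← mulVec_mulVec, LinearMap.toMatrix'_mulVec, ← hz]
    simp
  rw [mul_assoc, hcol, nonsing_inv_mul_cancel_left _ _ hdet]

end Rigidity

section Multiplier

variable {F ι : Type*} [Field F] [Fintype ι] {A M N P Q : Matrix ι ι F}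

lemma one_sub_two_mul_mul_self {R : Type*} [Ring R] {e : R} (he : IsIdempotentElem e) :
    (1 - 2 * e) * (1 - 2 * e) = 1 := by
  calc (1 - 2 * e) * (1 - 2 * e) = 1 - 4 * e + 4 * (e * e) := by noncomm_ring
    _ = 1 := by rw [he.eq, sub_add_cancel]

lemma ext_of_trace_mul_isIdempotentElem
    (h : ∀ E, IsIdempotentElem E → trace (M * E) = trace (N * E)) : M = N := by
  classical
  have hdiag : ∀ i, M i i = N i i := fun i ↦ by
    simpa [trace_mul_single] using h (single i i 1) (by simp [IsIdempotentElem])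
  ext j i
  obtain rfl | hij := eq_or_ne i j
  · exact hdiag i
  · have hE : IsIdempotentElem (single i i 1 + single i j 1 : Matrix ι ι F) := by
      simp [IsIdempotentElem, mul_add, add_mul, hij.symm]
    simpa [mul_add, trace_mul_single, hdiag i] using h _ hE

variable [DecidableEq ι]

lemma mem_range_scalar_of_commute_isIdempotentElem
    (h : ∀ E, IsIdempotentElem E → Commute E M) : M ∈ Set.range (scalar ι) := by
  refine mem_range_scalar_of_commute_single fun i j hij ↦ ?_
  have hE : IsIdempotentElem (single i i 1 + single i j 1 : Matrix ι ι F) := by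
    simp [IsIdempotentElem, mul_add, add_mul, hij.symm]
  simpa using (h _ hE).sub_left (h (single i i 1) (by simp [IsIdempotentElem]))

namespace IsProdTwoInvolutions

lemma trace_inv (hA : IsProdTwoInvolutions A) : trace A⁻¹ = trace A := by
  obtain ⟨s, t, hs, ht, rfl⟩ := hA
  rw [Matrix.mul_inv_rev, inv_eq_left_inv hs, inv_eq_left_inv ht, trace_mul_comm]

lemma transpose (hA : IsProdTwoInvolutions A) : IsProdTwoInvolutions Aᵀ := by
  obtain ⟨s, t, hs, ht, rfl⟩ := hA
  exact ⟨tᵀ, sᵀ, by rw [← transpose_mul, ht, transpose_one],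
    by rw [← transpose_mul, hs, transpose_one], transpose_mul s t⟩

lemma conj (hA : IsProdTwoInvolutions A) (hP : IsUnit P) :
    IsProdTwoInvolutions (P * A * P⁻¹) := by
  obtain ⟨u, rfl⟩ := hP
  rw [← coe_units_inv]
  exact hA.map (MulDistribMulAction.toMonoidEnd _ _ (ConjAct.toConjAct u))

lemma smul {R : Type*} [Ring R] [Module F R] {a : R} {α : F}
    (ha : IsProdTwoInvolutions a) (hα : α = 1 ∨ α = -1) : IsProdTwoInvolutions (α • a) := by
  rcases hα with rfl | rfl
  · rwa [one_smul]
  · rw [neg_one_smul]; exact ha.neg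

end IsProdTwoInvolutions

lemma trace_mul_involutions_eq
    (hM : ∀ A, IsProdTwoInvolutions A → IsProdTwoInvolutions (A * M)) {s t : Matrix ι ι F}
    (hs : s * s = 1) (ht : t * t = 1) : trace (M * (s * t)) = trace (M⁻¹ * (t * s)) := by
  have h := (hM (s * t) ⟨s, t, hs, ht, rfl⟩).trace_inv
  rwa [Matrix.mul_inv_rev, Matrix.mul_inv_rev, inv_eq_left_inv hs, inv_eq_left_inv ht,
    trace_mul_comm (s * t), eq_comm] at h

lemma inv_eq_self_of_forall_isProdTwoInvolutions_mul (h2 : (2 : F) ≠ 0)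
    (hM : ∀ A, IsProdTwoInvolutions A → IsProdTwoInvolutions (A * M)) : M⁻¹ = M := by
  refine (ext_of_trace_mul_isIdempotentElem fun E hE ↦ mul_left_cancel₀ h2 ?_).symm
  have h1 := trace_mul_involutions_eq hM (one_mul 1) (one_mul 1)
  have hE := trace_mul_involutions_eq hM (one_sub_two_mul_mul_self hE) (one_mul 1)
  simp only [mul_one, one_mul, two_mul, mul_sub, mul_add, trace_sub, trace_add] at h1 hE
  linear_combination h1 - hE

lemma commute_of_forall_isProdTwoInvolutions_mul (h2 : (2 : F) ≠ 0)
    (hM : ∀ A, IsProdTwoInvolutions A → IsProdTwoInvolutions (A * M)) {E : Matrix ι ι F}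
    (hE : IsIdempotentElem E) : Commute E M := by
  refine ext_of_trace_mul_isIdempotentElem fun E' hE' ↦
    mul_left_cancel₀ h2 (mul_left_cancel₀ h2 ?_)
  have h := trace_mul_involutions_eq hM (one_sub_two_mul_mul_self hE)
    (one_sub_two_mul_mul_self hE')
  rw [inv_eq_self_of_forall_isProdTwoInvolutions_mul h2 hM] at h
  simp only [mul_one, one_mul, two_mul, mul_sub, sub_mul, mul_add, add_mul, trace_sub,
    trace_add] at h
  have hcycle : trace (E * M * E') = trace (M * (E' * E)) := by
    rw [mul_assoc, trace_mul_comm, mul_assoc]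
  rw [hcycle, mul_assoc M]
  linear_combination -h

lemma eq_one_or_eq_neg_one_of_forall_isProdTwoInvolutions_mul (h2 : (2 : F) ≠ 0)
    (hM : ∀ A, IsProdTwoInvolutions A → IsProdTwoInvolutions (A * M)) : M = 1 ∨ M = -1 := by
  cases isEmpty_or_nonempty ι
  · exact Or.inl (Subsingleton.elim _ _)
  have hunit : IsUnit M.det := by
    simpa [isUnit_iff_isUnit_det] using (hM 1 ⟨1, 1, by simp⟩).isUnit
  have hsq : M * M = 1 := by
    simpa [inv_eq_self_of_forall_isProdTwoInvolutions_mul h2 hM] using mul_nonsing_inv M hunit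
  obtain ⟨m, rfl⟩ := mem_range_scalar_of_commute_isIdempotentElem fun E hE ↦
    commute_of_forall_isProdTwoInvolutions_mul h2 hM hE
  rw [← map_mul, ← map_one (scalar ι), scalar_inj, mul_self_eq_one_iff] at hsq
  exact hsq.imp (by rintro rfl; exact map_one _)
    (by rintro rfl; rw [map_neg, map_one])

lemma exists_forall_eq_smul_conj (h2 : (2 : F) ≠ 0)
    (hPQ : ∀ A, IsProdTwoInvolutions A → IsProdTwoInvolutions (P * A * Q)) :
    IsUnit P ∧ ∃ α : F, (α = 1 ∨ α = -1) ∧ ∀ X, P * X * Q = α • (P * X * P⁻¹) := by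
  have hP : IsUnit P.det := by
    have h := (hPQ 1 ⟨1, 1, by simp⟩).isUnit
    rw [mul_one, isUnit_iff_isUnit_det, det_mul] at h
    exact isUnit_of_mul_isUnit_left h
  refine ⟨(isUnit_iff_isUnit_det P).2 hP, ?_⟩
  have hQP : Q * P = 1 ∨ Q * P = -1 :=
    eq_one_or_eq_neg_one_of_forall_isProdTwoInvolutions_mul h2 fun A hA ↦ by
      have h := (hPQ A hA).conj (isUnit_nonsing_inv_iff.2 ((isUnit_iff_isUnit_det P).2 hP))
      rwa [nonsing_inv_nonsing_inv P hP, mul_assoc P, nonsing_inv_mul_cancel_left _ _ hP,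
        mul_assoc] at h
  have hQ : Q = Q * P * P⁻¹ := (mul_nonsing_inv_cancel_right _ _ hP).symm
  rcases hQP with h | h <;> rw [h] at hQ
  · exact ⟨1, Or.inl rfl, fun X ↦ by rw [hQ]; simp⟩
  · exact ⟨-1, Or.inr rfl, fun X ↦ by rw [hQ]; simp⟩

end Multiplier

section Preservers

variable {F : Type*} [Field F]

lemma HasCommonCokernelVec.vanishingAt_transpose_trans {ι : Type*} [Fintype ι]
    {T : Matrix ι ι F ≃ₗ[F] Matrix ι ι F} {x : ι → F}
    (h : HasCommonCokernelVec (vanishingAt T x)) :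
    HasCommonKernelVec (vanishingAt ((transposeLinearEquiv ι ι F F).trans T) x) := by
  obtain ⟨z, hz, hzX⟩ := h
  exact ⟨z, hz, fun X hX ↦ by simpa [vecMul_transpose] using hzX Xᵀ hX⟩

theorem exists_forall_eq_smul_conj_or_eq_smul_conj_transpose (h2 : (2 : F) ≠ 0)
    {n : ℕ} (hn : 2 ≤ n) {T : Matrix (Fin n) (Fin n) F ≃ₗ[F] Matrix (Fin n) (Fin n) F}
    (hT : ∀ A, IsProdTwoInvolutions A → IsProdTwoInvolutions (T A)) :
    ∃ (α : F) (P : Matrix (Fin n) (Fin n) F), (α = 1 ∨ α = -1) ∧ IsUnit P ∧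
      ((∀ X, T X = α • (P * X * P⁻¹)) ∨ ∀ X, T X = α • (P * Xᵀ * P⁻¹)) := by
  have : Nonempty (Fin n) := ⟨⟨0, by omega⟩⟩
  rcases forall_hasCommonKernelVec_or_forall_hasCommonCokernelVec fun x hx ↦
    hasCommonKernelVec_or_hasCommonCokernelVec_vanishingAt h2 hn hT hx with h | h
  · obtain ⟨P, Q, hPQ⟩ := exists_forall_eq_mul_mul h
    obtain ⟨hP, α, hα, hX⟩ := exists_forall_eq_smul_conj h2 fun A hA ↦ hPQ A ▸ hT A hA
    exact ⟨α, P, hα, hP, Or.inl fun X ↦ by rw [hPQ, hX]⟩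
  · obtain ⟨P, Q, hPQ⟩ := exists_forall_eq_mul_mul fun x hx ↦ (h x hx).vanishingAt_transpose_trans
    have hTt : ∀ X, T Xᵀ = P * X * Q := hPQ
    obtain ⟨hP, α, hα, hX⟩ :=
      exists_forall_eq_smul_conj h2 fun A hA ↦ hTt A ▸ hT Aᵀ hA.transpose
    exact ⟨α, P, hα, hP, Or.inr fun X ↦ by rw [← hX, ← hTt, transpose_transpose]⟩

end Preservers

theorem stmt0 (F : Type*) [Field F] (hchar : ringChar F ≠ 2) (n : ℕ) (hn : 2 ≤ n)
    (T : Matrix (Fin n) (Fin n) F →ₗ[F] Matrix (Fin n) (Fin n) F)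
    (hT : Function.Bijective T) :
    (∀ A ∈ ProdInv2 F n, T A ∈ ProdInv2 F n) ↔
      ∃ (α : F) (P : Matrix (Fin n) (Fin n) F), (α = 1 ∨ α = -1) ∧ IsUnit P ∧
        ((∀ X, T X = α • (P * X * P⁻¹)) ∨ (∀ X, T X = α • (P * Xᵀ * P⁻¹))) := by
  constructor
  · exact exists_forall_eq_smul_conj_or_eq_smul_conj_transpose (Ring.two_ne_zero hchar) hn
      (T := LinearEquiv.ofBijective T hT)
  · rintro ⟨α, P, hα, hP, h | h⟩ A (hA : IsProdTwoInvolutions A) <;> rw [h]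
    · exact (hA.conj hP).smul hα
    · exact (hA.transpose.conj hP).smul hα
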